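/- arXiv:2303.03345 — 2 statements merged into one kernel-verified Lean document; each statement's English description precedes it below -/
import Mathlib

section
/- There exist constants C₀ ≥ 1 and c₀ > 0 (depending only on h and the choice of the roots z_p) such that the following holds. Let d, N be positive integers, let A ⊆ {1,…,N} be h_d-free with density σ = |A|/N, let ν ∈ [0,1), and let K ≥ 1 and q ≥ 1 satisfy ν·σ·N ≥ C₀·K·λ(q). Suppose that ∑_{1 ≤ a ≤ q, gcd(a,q)=1} ∫_{𝔐_{a,q}(N,K)} | 1̂_A(γ) − σ·1̂_{[N]}(γ) |² dγ ≥ ν·σ·|A|. Then there exist a positive integer N* ≥ c₀·ν·σ·N/(K·λ(q)) and an h_{qd}-free subset A* ⊆ {1,…,N*} whose density σ* = |A*|/N* satisfies σ* ≥ (1 + ν/73)·σ. -/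
/-- `e(x) = e^{2πix}`. -/
noncomputable def e (x : ℝ) : ℂ := Complex.exp (2 * Real.pi * Complex.I * x)

/-!
Convolve the balanced function `1_A - σ 1_{[N]}` with a progression of length `L` and step `λ(q)`.
Since `q ∣ λ(q)`, the Fourier transform of the progression has size at least `L / 2` on the arcs
around all `a / q`, so by Parseval the assumed `L²` mass bounds from below the variance of
`|A ∩ (x + λ(q)[L])|` over `x`. If every such intersection had density less than `(1 + ν/73) σ`,
this variance would be too small. Finally, `λ(q) h_{qd}(n)` is a value of `h_d`, so the rescaling of
`A ∩ (x + λ(q)[L])` to `[L]` is `h_{qd}`-free.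
-/

section CircleMethod

open Finset MeasureTheory
open AddCircle (haarAddCircle)

lemma e_add (x y : ℝ) : e (x + y) = e x * e y := by
  rw [e, e, e, ← Complex.exp_add]
  push_cast
  ring_nf

lemma e_intCast (n : ℤ) : e n = 1 :=
  Complex.exp_eq_one_iff.2 ⟨n, by push_cast; ring⟩

lemma re_e (x : ℝ) : (e x).re = Real.cos (2 * Real.pi * x) := by
  rw [← Complex.exp_ofReal_mul_I_re, e]
  push_cast
  ring_nf

lemma e_intCast_mul_eq_fourier (n : ℤ) (γ : ℝ) : e (n * γ) = fourier n (γ : UnitAddCircle) := by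
  rw [fourier_coe_apply, e]
  push_cast
  ring_nf

lemma half_le_re_e {x : ℝ} (hx : |x| ≤ 1 / 6) : 1 / 2 ≤ (e x).re := by
  rw [re_e, ← Real.cos_pi_div_three, ← Real.cos_abs (2 * Real.pi * x), abs_mul,
    abs_of_pos Real.two_pi_pos]
  apply Real.cos_le_cos_of_nonneg_of_le_pi (by positivity) <;> nlinarith [Real.pi_pos]

lemma e_mul_eq_e_mul_sub_div {q : ℕ} (hq : q ≠ 0) {m : ℤ} (hm : (q : ℤ) ∣ m) (a : ℤ) (γ : ℝ) :
    e (m * γ) = e (m * (γ - a / q)) := by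
  obtain ⟨u, rfl⟩ := hm
  have hsplit : ((q * u : ℤ) : ℝ) * γ = (u * a : ℤ) + ((q * u : ℤ) : ℝ) * (γ - a / q) := by
    push_cast
    field_simp
    ring
  rw [hsplit, e_add, e_intCast, one_mul]

/-- The exponential sum with coefficients `c` over the frequencies in `S`, i.e. the Fourier
transform of the function equal to `c` on `S` and to `0` elsewhere. -/
noncomputable def expSum (S : Finset ℤ) (c : ℤ → ℂ) (γ : ℝ) : ℂ := ∑ n ∈ S, c n * e (n * γ)

lemma expSum_eq_sum_smul_fourier (S : Finset ℤ) (c : ℤ → ℂ) (γ : ℝ) :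
    expSum S c γ = (∑ n ∈ S, c n • fourier n : C(UnitAddCircle, ℂ)) γ := by
  simp only [expSum, e_intCast_mul_eq_fourier, ContinuousMap.sum_apply, ContinuousMap.smul_apply,
    smul_eq_mul]

lemma continuous_expSum (S : Finset ℤ) (c : ℤ → ℂ) : Continuous (expSum S c) := by
  unfold expSum e
  fun_prop

lemma periodic_expSum (S : Finset ℤ) (c : ℤ → ℂ) : Function.Periodic (expSum S c) 1 := fun γ ↦ by
  simp only [expSum_eq_sum_smul_fourier, AddCircle.coe_add_period]

lemma fourierCoeff_sum_smul_fourier (S : Finset ℤ) (c : ℤ → ℂ) (n : ℤ) :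
    fourierCoeff (∑ m ∈ S, c m • fourier m : C(UnitAddCircle, ℂ)) n = if n ∈ S then c n else 0 := by
  rw [ContinuousMap.coe_sum, fourierCoeff.sum _ _ fun m _ ↦
    (c m • fourier m : C(UnitAddCircle, ℂ)).continuous.integrable_of_hasCompactSupport
      (.of_compactSpace _)]
  simp only [ContinuousMap.coe_smul, Finset.sum_apply, fourierCoeff.const_smul,
    fourierCoeff_fourier, Pi.single_apply, smul_eq_mul, mul_ite, mul_one, mul_zero, sum_ite_eq]

theorem integral_norm_expSum_sq (S : Finset ℤ) (c : ℤ → ℂ) :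
    ∫ γ in (0 : ℝ)..1, ‖expSum S c γ‖ ^ 2 = ∑ n ∈ S, ‖c n‖ ^ 2 := by
  set F : C(UnitAddCircle, ℂ) := ∑ n ∈ S, c n • fourier n with hF
  calc ∫ γ in (0 : ℝ)..1, ‖expSum S c γ‖ ^ 2
      = ∫ t : UnitAddCircle, ‖F t‖ ^ 2 := by
        simp only [expSum_eq_sum_smul_fourier, ← hF]
        simpa only [zero_add] using UnitAddCircle.intervalIntegral_preimage 0 fun t ↦ ‖F t‖ ^ 2
    _ = ∫ t, ‖ContinuousMap.toLp 2 haarAddCircle ℂ F t‖ ^ 2 ∂haarAddCircle := by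
        rw [AddCircle.volume_eq_smul_haarAddCircle, ENNReal.ofReal_one, one_smul]
        refine integral_congr_ae ?_
        filter_upwards [ContinuousMap.coeFn_toLp (p := 2) (𝕜 := ℂ) haarAddCircle F] with t ht
        rw [ht]
    _ = ∑' n, ‖if n ∈ S then c n else 0‖ ^ 2 := by
        simp only [← tsum_sq_fourierCoeff, fourierCoeff_toLp, hF, fourierCoeff_sum_smul_fourier]
    _ = ∑ n ∈ S, ‖c n‖ ^ 2 := by
        rw [tsum_eq_sum (s := S) fun n hn ↦ by simp [hn]]
        exact sum_congr rfl fun n hn ↦ by rw [if_pos hn]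

lemma setIntegral_Icc_le_sum_integral {G : ℝ → ℝ} (hG : Continuous G) (hG0 : 0 ≤ G)
    {q : ℕ} (hq : q ≠ 0) {δ : ℝ} (hδ : 0 ≤ δ) (x : ℝ) :
    ∫ γ in Set.Icc (x - δ) (x + δ), G γ ≤
      ∑ i ∈ range ⌈2 * q * δ⌉₊, ∫ γ in (x - δ + i / q)..(x - δ + (i + 1) / q), G γ := by
  have hcover : x + δ ≤ x - δ + (⌈2 * q * δ⌉₊ : ℝ) / q := by
    have hdiam : 2 * δ ≤ (⌈2 * q * δ⌉₊ : ℝ) / q := by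
      rw [le_div_iff₀ (by positivity)]
      linarith [Nat.le_ceil (2 * q * δ)]
    linarith
  have hadj := intervalIntegral.sum_integral_adjacent_intervals (f := G) (μ := volume)
    (a := fun i : ℕ ↦ x - δ + i / q) (n := ⌈2 * q * δ⌉₊) fun i _ ↦ hG.intervalIntegrable _ _
  simp only [Nat.cast_add, Nat.cast_one, Nat.cast_zero, zero_div, add_zero] at hadj
  rw [hadj, integral_Icc_eq_integral_Ioc, ← intervalIntegral.integral_of_le (by linarith)]
  exact intervalIntegral.integral_mono_interval le_rfl (by linarith) hcover
    (.of_forall hG0) (hG.intervalIntegrable _ _)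

lemma sum_integral_translates_eq {G : ℝ → ℝ} (hG : Continuous G) (hper : Function.Periodic G 1)
    {q : ℕ} (hq : q ≠ 0) (x : ℝ) :
    ∑ a ∈ Icc 1 q, ∫ γ in (x + a / q)..(x + (a + 1) / q), G γ = ∫ γ in (0 : ℝ)..1, G γ := by
  have hadj := intervalIntegral.sum_integral_adjacent_intervals_Ico (f := G) (μ := volume)
    (a := fun a : ℕ ↦ x + a / q) (m := 1) (n := q + 1) (by omega)
    fun a _ ↦ hG.intervalIntegrable _ _
  have hlen : x + ((q + 1 : ℕ) : ℝ) / q = x + (1 : ℕ) / q + 1 := by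
    push_cast
    field_simp
    ring
  rw [hlen, hper.intervalIntegral_add_eq _ 0, zero_add, Ico_add_one_right_eq_Icc] at hadj
  simpa only [Nat.cast_add, Nat.cast_one] using hadj

/-- The `L²` mass of `F` on the arcs of radius `δ` around the fractions `a / q`, `1 ≤ a ≤ q`. The
arcs are intervals of `ℝ`, and where they overlap modulo `1` they count with multiplicity. -/
noncomputable def arcEnergy (q : ℕ) (δ : ℝ) (F : ℝ → ℂ) : ℝ :=
  ∑ a ∈ Icc 1 q, ∫ γ in Set.Icc ((a : ℝ) / q - δ) (a / q + δ), ‖F γ‖ ^ 2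

-- Each arc is covered by `⌈2qδ⌉` adjacent intervals of length `1/q`; for a fixed position in the
-- cover, the intervals coming from the `q` arcs tile a full period.
lemma arcEnergy_le_of_periodic {q : ℕ} (hq : q ≠ 0) {δ : ℝ} (hδ : 0 ≤ δ) {F : ℝ → ℂ}
    (hF : Continuous F) (hper : Function.Periodic F 1) :
    arcEnergy q δ F ≤ (2 * q * δ + 1) * ∫ γ in (0 : ℝ)..1, ‖F γ‖ ^ 2 := by
  have hcont : Continuous fun γ ↦ ‖F γ‖ ^ 2 := by fun_prop
  have tile (i : ℕ) : ∑ a ∈ Icc 1 q,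
      ∫ γ in ((a : ℝ) / q - δ + i / q)..(a / q - δ + (i + 1) / q), ‖F γ‖ ^ 2 =
      ∫ γ in (0 : ℝ)..1, ‖F γ‖ ^ 2 := by
    rw [← sum_integral_translates_eq hcont (hper.comp (‖·‖ ^ 2)) hq (i / q - δ)]
    refine sum_congr rfl fun a _ ↦ ?_
    congr 1 <;> ring
  calc arcEnergy q δ F
      ≤ ∑ a ∈ Icc 1 q, ∑ i ∈ range ⌈2 * q * δ⌉₊,
          ∫ γ in ((a : ℝ) / q - δ + i / q)..(a / q - δ + (i + 1) / q), ‖F γ‖ ^ 2 :=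
        sum_le_sum fun a _ ↦
          setIntegral_Icc_le_sum_integral hcont (fun γ ↦ by positivity) hq hδ _
    _ = ⌈2 * q * δ⌉₊ * ∫ γ in (0 : ℝ)..1, ‖F γ‖ ^ 2 := by
        rw [sum_comm, sum_congr rfl fun i _ ↦ tile i, sum_const, card_range, nsmul_eq_mul]
    _ ≤ (2 * q * δ + 1) * ∫ γ in (0 : ℝ)..1, ‖F γ‖ ^ 2 := by
        gcongr
        · exact intervalIntegral.integral_nonneg zero_le_one fun γ _ ↦ by positivity
        · exact (Nat.ceil_lt_add_one (by positivity)).le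

lemma arcEnergy_expSum_le {q : ℕ} (hq : q ≠ 0) {δ : ℝ} (hδ : 0 ≤ δ) (S : Finset ℤ) (c : ℤ → ℂ) :
    arcEnergy q δ (expSum S c) ≤ (2 * q * δ + 1) * ∑ n ∈ S, ‖c n‖ ^ 2 :=
  integral_norm_expSum_sq S c ▸
    arcEnergy_le_of_periodic hq hδ (continuous_expSum S c) (periodic_expSum S c)

lemma mul_arcEnergy_le {q : ℕ} {δ κ : ℝ} {F G : ℝ → ℂ} (hF : Continuous F) (hG : Continuous G)
    (hle : ∀ a : ℕ, ∀ γ ∈ Set.Icc ((a : ℝ) / q - δ) (a / q + δ), κ * ‖F γ‖ ^ 2 ≤ ‖G γ‖ ^ 2) :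
    κ * arcEnergy q δ F ≤ arcEnergy q δ G := by
  rw [arcEnergy, mul_sum]
  refine sum_le_sum fun a _ ↦ ?_
  rw [← integral_const_mul]
  exact setIntegral_mono_on (Continuous.integrableOn_Icc (by fun_prop))
    (Continuous.integrableOn_Icc (by fun_prop)) measurableSet_Icc (hle a)

section ProgressionSum

variable {M : Type*} [AddCommMonoid M] {N l L : ℕ}

/-- The sum of `f` over the progression `x + l, x + 2l, …, x + Ll`. -/
def progressionSum (f : ℤ → M) (l L : ℕ) (x : ℤ) : M := ∑ j ∈ Icc 1 L, f (x + l * j)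

/-- An interval containing every `x` whose progression `x + l, x + 2l, …, x + Ll` meets
`{1, …, N}`. -/
noncomputable def progressionWindow (N l L : ℕ) : Finset ℤ := Icc (1 - l * L) N

lemma card_progressionWindow (N l L : ℕ) : #(progressionWindow N l L) = N + l * L := by
  rw [progressionWindow, Int.card_Icc]
  omega

lemma sum_progressionWindow_shift {f : ℤ → M} (hf : f.support ⊆ Set.Icc 1 N) {j : ℕ} (hj : j ≤ L) :
    ∑ x ∈ progressionWindow N l L, f (x + l * j) = ∑ n ∈ Icc (1 : ℤ) N, f n := by
  have hj0 : (0 : ℤ) ≤ l * j := by positivity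
  have hjL : (l * j : ℤ) ≤ l * L := by gcongr
  refine (sum_of_injOn (· - (l * j : ℤ)) (sub_left_injective.injOn) ?_ ?_ ?_).symm
  · intro n hn
    simp only [coe_Icc, Set.mem_Icc, progressionWindow] at hn ⊢
    omega
  · intro x _ hx
    by_contra hfx
    refine hx ⟨x + l * j, ?_, add_sub_cancel_right _ _⟩
    rw [coe_Icc]
    exact hf hfx
  · simp

lemma sum_progressionSum {f : ℤ → M} (hf : f.support ⊆ Set.Icc 1 N) :
    ∑ x ∈ progressionWindow N l L, progressionSum f l L x = L • ∑ n ∈ Icc (1 : ℤ) N, f n := by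
  simp only [progressionSum]
  rw [sum_comm, sum_congr rfl fun j hj ↦ sum_progressionWindow_shift hf (mem_Icc.1 hj).2, sum_const,
    Nat.card_Icc, Nat.add_sub_cancel]

lemma expSum_progressionSum {f : ℤ → ℂ} (hf : f.support ⊆ Set.Icc 1 N) (γ : ℝ) :
    expSum (progressionWindow N l L) (progressionSum f l L) γ =
      (∑ j ∈ Icc 1 L, e ((-(l * j) : ℤ) * γ)) * expSum (Icc 1 N) f γ := by
  simp only [expSum, progressionSum, sum_mul]
  rw [sum_comm]
  refine sum_congr rfl fun j hj ↦ ?_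
  have hsupp : (fun n : ℤ ↦ f n * e (n * γ)).support ⊆ Set.Icc 1 N :=
    (Function.support_mul_subset_left f _).trans hf
  rw [← sum_progressionWindow_shift (l := l) hsupp (mem_Icc.1 hj).2, mul_sum]
  refine sum_congr rfl fun x _ ↦ ?_
  rw [mul_left_comm, ← e_add]
  push_cast
  ring_nf

lemma half_le_norm_sum_e {q : ℕ} (hq : q ≠ 0) (hql : q ∣ l) {δ γ : ℝ} {a : ℤ}
    (hγ : |γ - a / q| ≤ δ) (hδ : L * l * δ ≤ 1 / 6) :
    (L : ℝ) / 2 ≤ ‖∑ j ∈ Icc 1 L, e ((-(l * j) : ℤ) * γ)‖ := by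
  have term_ge (j : ℕ) (hj : j ∈ Icc 1 L) : 1 / 2 ≤ (e ((-(l * j) : ℤ) * γ)).re := by
    have hdvd : (q : ℤ) ∣ -(l * j) := by
      rw [dvd_neg]
      exact (Int.natCast_dvd_natCast.2 hql).mul_right _
    rw [e_mul_eq_e_mul_sub_div hq hdvd a]
    refine half_le_re_e (le_trans ?_ hδ)
    have hjL : (j : ℝ) ≤ L := by exact_mod_cast (mem_Icc.1 hj).2
    calc |((-(l * j) : ℤ) : ℝ) * (γ - a / q)| = j * l * |γ - a / q| := by
          rw [abs_mul]
          push_cast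
          rw [abs_neg, abs_of_nonneg (by positivity), mul_comm (l : ℝ)]
      _ ≤ L * l * δ := by gcongr
  calc (L : ℝ) / 2 = ∑ j ∈ Icc 1 L, (1 / 2 : ℝ) := by
        rw [sum_const, Nat.card_Icc, Nat.add_sub_cancel, nsmul_eq_mul, mul_one_div]
    _ ≤ (∑ j ∈ Icc 1 L, e ((-(l * j) : ℤ) * γ)).re := by
        rw [Complex.re_sum]
        exact sum_le_sum term_ge
    _ ≤ _ := Complex.re_le_norm _

lemma sq_mul_arcEnergy_expSum_le {q : ℕ} (hq : q ≠ 0) (hql : q ∣ l) {δ : ℝ} (hδ0 : 0 ≤ δ)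
    (hδ : L * l * δ ≤ 1 / 6) {f : ℤ → ℂ} (hf : f.support ⊆ Set.Icc 1 N) :
    (L / 2 : ℝ) ^ 2 * arcEnergy q δ (expSum (Icc 1 N) f) ≤
      (2 * q * δ + 1) * ∑ x ∈ progressionWindow N l L, ‖progressionSum f l L x‖ ^ 2 := by
  refine (mul_arcEnergy_le (continuous_expSum _ _) (continuous_expSum _ _)
    fun a γ hγ ↦ ?_).trans (arcEnergy_expSum_le hq hδ0 _ (progressionSum f l L))
  have hγa : |γ - (a : ℤ) / q| ≤ δ := by
    rw [Int.cast_natCast, abs_sub_le_iff]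
    constructor <;> linarith [hγ.1, hγ.2]
  rw [expSum_progressionSum hf, norm_mul, mul_pow]
  gcongr
  exact half_le_norm_sum_e hq hql hγa hδ

end ProgressionSum

section DensityIncrement

variable {A : Finset ℤ} {N l L : ℕ}

/-- The balanced function `1_A - σ 1_{[N]}` of a set `A ⊆ {1, …, N}` of density `σ = |A| / N`. -/
noncomputable def balanced (A : Finset ℤ) (N : ℕ) : ℤ → ℝ :=
  (A : Set ℤ).indicator 1 - ((#A : ℝ) / N) • (Set.Icc (1 : ℤ) N).indicator 1

lemma support_indicator_subset_Icc (hA : A ⊆ Icc 1 (N : ℤ)) :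
    ((A : Set ℤ).indicator (1 : ℤ → ℝ)).support ⊆ Set.Icc 1 N := by
  rw [← coe_Icc]
  exact Set.support_indicator_subset.trans (coe_subset.2 hA)

lemma support_balanced_subset (hA : A ⊆ Icc 1 (N : ℤ)) :
    (balanced A N).support ⊆ Set.Icc 1 N :=
  (Function.support_sub _ _).trans <| Set.union_subset (support_indicator_subset_Icc hA) <|
    (Function.support_const_smul_subset _ _).trans Set.support_indicator_subset

lemma progressionSum_balanced (x : ℤ) :
    progressionSum (balanced A N) l L x = progressionSum ((A : Set ℤ).indicator 1) l L x -
      #A / N * progressionSum ((Set.Icc (1 : ℤ) N).indicator 1) l L x := by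
  simp only [progressionSum, balanced, Pi.sub_apply, Pi.smul_apply, smul_eq_mul, sum_sub_distrib,
    mul_sum]

lemma progressionSum_indicator_nonneg (s : Set ℤ) (x : ℤ) :
    0 ≤ progressionSum (s.indicator (1 : ℤ → ℝ)) l L x :=
  sum_nonneg fun _ _ ↦ Set.indicator_nonneg (fun _ _ ↦ zero_le_one) _

lemma progressionSum_indicator_le (s : Set ℤ) (x : ℤ) :
    progressionSum (s.indicator (1 : ℤ → ℝ)) l L x ≤ L := by
  have hterm (j : ℕ) (_ : j ∈ Icc 1 L) : s.indicator (1 : ℤ → ℝ) (x + l * j) ≤ 1 :=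
    Set.indicator_apply_le' (fun _ ↦ le_rfl) fun _ ↦ zero_le_one
  simpa [progressionSum] using sum_le_card_nsmul _ _ _ hterm

lemma sum_progressionSum_indicator (hA : A ⊆ Icc 1 (N : ℤ)) :
    ∑ x ∈ progressionWindow N l L, progressionSum ((A : Set ℤ).indicator (1 : ℤ → ℝ)) l L x =
      L * #A := by
  rw [sum_progressionSum (support_indicator_subset_Icc hA), nsmul_eq_mul, sum_indicator_subset _ hA]
  simp

-- The error term `2 σ l L³` comes from the progressions that stick out of `{1, …, N}`.
theorem sum_progressionSum_balanced_sq_le (hN : N ≠ 0) (hA : A ⊆ Icc 1 (N : ℤ)) {T : ℝ}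
    (hT : ∀ x, progressionSum ((A : Set ℤ).indicator 1) l L x ≤ T) :
    ∑ x ∈ progressionWindow N l L, progressionSum (balanced A N) l L x ^ 2 ≤
      (T - #A / N * L) * (L * #A) + 2 * (#A / N) * (l * L ^ 3) := by
  set σ : ℝ := #A / N with hσ
  have hσ0 : 0 ≤ σ := by positivity
  have hσN : σ * N = #A := div_mul_cancel₀ _ (by exact_mod_cast hN)
  set α := progressionSum ((A : Set ℤ).indicator (1 : ℤ → ℝ)) l L
  set β := progressionSum ((Set.Icc (1 : ℤ) N).indicator (1 : ℤ → ℝ)) l L with hβ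
  have pointwise (x : ℤ) : progressionSum (balanced A N) l L x ^ 2 ≤
      (T - 2 * σ * L) * α x + 2 * σ * L * (L - β x) + σ ^ 2 * L * β x := by
    have hα0 : 0 ≤ α x := progressionSum_indicator_nonneg _ x
    have hαL : α x ≤ L := progressionSum_indicator_le _ x
    have hβ0 : 0 ≤ β x := progressionSum_indicator_nonneg _ x
    have hβL : β x ≤ L := progressionSum_indicator_le _ x
    have h_sq : α x * α x ≤ T * α x := by gcongr; exact hT x
    have h_cross : σ * (α x * (L - β x)) ≤ σ * (L * (L - β x)) := by gcongr
    have h_main : σ ^ 2 * (β x * β x) ≤ σ ^ 2 * (L * β x) := by gcongr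
    rw [progressionSum_balanced]
    linarith
  have hsumα : ∑ x ∈ progressionWindow N l L, α x = L * #A := sum_progressionSum_indicator hA
  have hsumβ : ∑ x ∈ progressionWindow N l L, β x = L * N := by
    simpa [hβ] using sum_progressionSum_indicator (l := l) (L := L) (subset_refl (Icc 1 (N : ℤ)))
  calc ∑ x ∈ progressionWindow N l L, progressionSum (balanced A N) l L x ^ 2
      ≤ ∑ x ∈ progressionWindow N l L,
          ((T - 2 * σ * L) * α x + 2 * σ * L * (L - β x) + σ ^ 2 * L * β x) :=
        sum_le_sum fun x _ ↦ pointwise x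
    _ = (T - 2 * σ * L) * (L * #A) + 2 * σ * L * ((N + l * L) * L - L * N) +
          σ ^ 2 * L * (L * N) := by
        simp only [sum_add_distrib, ← mul_sum, sum_sub_distrib, sum_const, nsmul_eq_mul,
          card_progressionWindow, hsumα, hsumβ, Nat.cast_add, Nat.cast_mul]
    _ = (T - σ * L) * (L * #A) + 2 * σ * (l * L ^ 3) := by
        rw [← hσN]
        ring

lemma sum_balanced_sq_le (hN : N ≠ 0) (hA : A ⊆ Icc 1 (N : ℤ)) :
    ∑ n ∈ Icc 1 (N : ℤ), balanced A N n ^ 2 ≤ #A := by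
  have hbound := sum_progressionSum_balanced_sq_le (l := 0) (L := 1) hN hA
    fun x ↦ progressionSum_indicator_le _ x
  simp only [progressionWindow, progressionSum, Icc_self, sum_singleton, Nat.cast_zero,
    Nat.cast_one, zero_mul, sub_zero, add_zero, mul_one, one_mul, mul_zero] at hbound
  have : (0 : ℝ) ≤ #A / N * #A := by positivity
  linarith

lemma arcEnergy_balanced_le (hN : N ≠ 0) (hA : A ⊆ Icc 1 (N : ℤ)) {q : ℕ} (hq : q ≠ 0) {δ : ℝ}
    (hδ : 0 ≤ δ) :
    arcEnergy q δ (expSum (Icc 1 N) fun n ↦ balanced A N n) ≤ (2 * q * δ + 1) * #A := by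
  refine (arcEnergy_expSum_le hq hδ _ _).trans ?_
  simp only [Complex.norm_real, Real.norm_eq_abs, sq_abs]
  gcongr
  exact sum_balanced_sq_le hN hA

lemma sq_mul_arcEnergy_balanced_le (hA : A ⊆ Icc 1 (N : ℤ)) {q : ℕ} (hq : q ≠ 0) (hql : q ∣ l)
    {δ : ℝ} (hδ0 : 0 ≤ δ) (hδ : L * l * δ ≤ 1 / 6) :
    (L / 2 : ℝ) ^ 2 * arcEnergy q δ (expSum (Icc 1 N) fun n ↦ balanced A N n) ≤
      (2 * q * δ + 1) *
        ∑ x ∈ progressionWindow N l L, progressionSum (balanced A N) l L x ^ 2 := by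
  have hsupp : (fun n ↦ (balanced A N n : ℂ)).support ⊆ Set.Icc 1 N := by
    simpa [Function.support] using support_balanced_subset hA
  have hcast (x : ℤ) : ‖progressionSum (fun n ↦ (balanced A N n : ℂ)) l L x‖ ^ 2 =
      progressionSum (balanced A N) l L x ^ 2 := by
    simp only [progressionSum, ← Complex.ofReal_sum, Complex.norm_real, Real.norm_eq_abs, sq_abs]
  simpa only [hcast] using sq_mul_arcEnergy_expSum_le hq hql hδ0 hδ hsupp

lemma mul_density_le_of_le_arcEnergy (hN : N ≠ 0) (hA : A ⊆ Icc 1 (N : ℤ)) (hne : A.Nonempty)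
    {q : ℕ} (hq : q ≠ 0) {δ ν : ℝ} (hδ : 0 ≤ δ)
    (henergy : ν * (#A / N) * #A ≤ arcEnergy q δ (expSum (Icc 1 N) fun n ↦ balanced A N n)) :
    ν * (#A / N) ≤ 2 * q * δ + 1 :=
  le_of_mul_le_mul_right (henergy.trans (arcEnergy_balanced_le hN hA hq hδ))
    (by exact_mod_cast hne.card_pos)

theorem exists_progressionSum_indicator_ge (hN : N ≠ 0) (hA : A ⊆ Icc 1 (N : ℤ)) (hl : l ≠ 0)
    (hL : L ≠ 0) {q : ℕ} (hql : q ∣ l) {δ ν : ℝ} (hδ0 : 0 ≤ δ) (hδ : L * l * δ ≤ 1 / 6)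
    (hν : 64 * (l * L) ≤ ν * #A)
    (henergy : ν * (#A / N) * #A ≤ arcEnergy q δ (expSum (Icc 1 N) fun n ↦ balanced A N n)) :
    ∃ x, (1 + ν / 73) * (#A / N) * L ≤
      progressionSum ((A : Set ℤ).indicator (1 : ℤ → ℝ)) l L x := by
  by_contra! hlt
  have hq : q ≠ 0 := ne_zero_of_dvd_ne_zero hl hql
  have hνA : 0 < ν * #A := lt_of_lt_of_le (by positivity) hν
  have hA0 : (0 : ℝ) < #A := by
    refine (Nat.cast_nonneg _).lt_of_ne fun h ↦ ?_
    rw [← h, mul_zero] at hνA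
    exact hνA.false
  set σ : ℝ := #A / N
  have hσ : 0 < σ := by positivity
  have hqδ : q * δ ≤ 1 / 6 := by
    refine le_trans ?_ hδ
    gcongr
    exact_mod_cast (Nat.le_of_dvd (by positivity) hql).trans
      (Nat.le_mul_of_pos_left l (by positivity))
  have hlower := sq_mul_arcEnergy_balanced_le hA hq hql hδ0 hδ
  have hupper := sum_progressionSum_balanced_sq_le hN hA fun x ↦ (hlt x).le
  have hcontra : σ * L ^ 2 * (ν * #A / 4) ≤ σ * L ^ 2 * (4 / 3 * (ν * #A / 73 + ν * #A / 32)) :=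
    calc σ * L ^ 2 * (ν * #A / 4) = (L / 2 : ℝ) ^ 2 * (ν * σ * #A) := by ring
      _ ≤ (L / 2 : ℝ) ^ 2 * arcEnergy q δ (expSum (Icc 1 N) fun n ↦ balanced A N n) := by gcongr
      _ ≤ (2 * q * δ + 1) *
            ∑ x ∈ progressionWindow N l L, progressionSum (balanced A N) l L x ^ 2 := hlower
      _ ≤ 4 / 3 * (((1 + ν / 73) * σ * L - σ * L) * (L * #A) + 2 * σ * (l * L ^ 3)) := by
        gcongr
        linarith
      _ = σ * L ^ 2 * (4 / 3 * (ν * #A / 73 + 2 * (l * L))) := by ring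
      _ ≤ σ * L ^ 2 * (4 / 3 * (ν * #A / 73 + ν * #A / 32)) := by
        gcongr
        linarith
  have := le_of_mul_le_mul_left hcontra (by positivity)
  linarith

lemma exists_nat_half_le_and_le {x : ℝ} (hx : 1 ≤ x) : ∃ n : ℕ, 0 < n ∧ x / 2 ≤ n ∧ n ≤ x := by
  have hpos : 0 < ⌊x⌋₊ := Nat.floor_pos.2 hx
  have hone : (1 : ℝ) ≤ ⌊x⌋₊ := by exact_mod_cast hpos
  exact ⟨⌊x⌋₊, hpos, by linarith [Nat.lt_floor_add_one x], Nat.floor_le (by linarith)⟩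

theorem exists_length_progressionSum_indicator_ge (hN : N ≠ 0) (hA : A ⊆ Icc 1 (N : ℤ))
    (hl : l ≠ 0) {q : ℕ} (hql : q ∣ l) {K ν : ℝ} (hK : 1 ≤ K)
    (hν : 64 * K * l ≤ ν * (#A / N) * N)
    (henergy : ν * (#A / N) * #A ≤
      arcEnergy q (K / N) (expSum (Icc 1 N) fun n ↦ balanced A N n)) :
    ∃ L : ℕ, 0 < L ∧ 1 / 128 * ν * (#A / N) * N / (K * l) ≤ L ∧
      ∃ x, (1 + ν / 73) * (#A / N) * L ≤
        progressionSum ((A : Set ℤ).indicator (1 : ℤ → ℝ)) l L x := by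
  have hq : q ≠ 0 := ne_zero_of_dvd_ne_zero hl hql
  obtain ⟨L, hL0, hLge, hLle⟩ := exists_nat_half_le_and_le (x := ν * (#A / N) * N / (64 * K * l))
    ((one_le_div (by positivity)).2 hν)
  rw [le_div_iff₀ (by positivity)] at hLle
  have hLδ : 64 * (L * l * (K / N)) ≤ ν * (#A / N) := by
    refine le_of_mul_le_mul_right (a := (N : ℝ)) ?_ (by positivity)
    calc 64 * (L * l * (K / N)) * N = L * (64 * K * l) := by field_simp
      _ ≤ ν * (#A / N) * N := hLle
  have hLA : 64 * (l * L) ≤ ν * #A := by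
    calc (64 * (l * L) : ℝ) ≤ K * (64 * (l * L)) := le_mul_of_one_le_left (by positivity) hK
      _ = L * (64 * K * l) := by ring
      _ ≤ ν * (#A / N) * N := hLle
      _ = ν * #A := by field_simp
  have hne : A.Nonempty := by
    rw [nonempty_iff_ne_empty]
    rintro rfl
    simp only [card_empty, Nat.cast_zero, mul_zero] at hLA
    exact hLA.not_gt (by positivity)
  have hqδ : q * (K / N) ≤ L * l * (K / N) := by
    gcongr
    exact_mod_cast (Nat.le_of_dvd (by positivity) hql).trans (Nat.le_mul_of_pos_left l hL0)
  have hσ := mul_density_le_of_le_arcEnergy hN hA hne hq (by positivity) henergy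
  refine ⟨L, hL0, le_of_eq_of_le ?_ hLge,
    exists_progressionSum_indicator_ge hN hA hl hL0.ne' hql (by positivity) ?_ hLA henergy⟩
  · field_simp
    ring
  · linarith

end DensityIncrement

section NaturalSets

variable {A : Finset ℕ} {N : ℕ}

lemma map_castEmbedding_Icc (N : ℕ) :
    (Icc 1 N).map Nat.castEmbedding = Icc (1 : ℤ) N := by
  rw [← coe_inj, coe_map, coe_Icc, coe_Icc]
  exact Nat.image_cast_int_Icc 1 N

lemma map_castEmbedding_subset_Icc (hA : A ⊆ Icc 1 N) :
    A.map Nat.castEmbedding ⊆ Icc 1 (N : ℤ) :=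
  map_castEmbedding_Icc N ▸ map_subset_map.2 hA

lemma expSum_balanced_map_castEmbedding (hA : A ⊆ Icc 1 N) (γ : ℝ) :
    expSum (Icc 1 N) (fun n ↦ balanced (A.map Nat.castEmbedding) N n) γ =
      ∑ n ∈ A, e (n * γ) - ((#A / N : ℝ) : ℂ) * ∑ n ∈ Icc 1 N, e (n * γ) := by
  have hterm (n : ℕ) (hn : n ∈ Icc 1 N) :
      ((balanced (A.map Nat.castEmbedding) N n : ℝ) : ℂ) * e ((n : ℤ) * γ) =
        (if n ∈ A then e (n * γ) else 0) - ((#A / N : ℝ) : ℂ) * e (n * γ) := by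
    have hnN : (n : ℤ) ∈ Set.Icc (1 : ℤ) N := by simpa using hn
    by_cases hnA : n ∈ A <;> simp [balanced, hnN, hnA, sub_mul]
  rw [expSum, ← map_castEmbedding_Icc, sum_map]
  simp only [Nat.castEmbedding_apply]
  rw [sum_congr rfl hterm, sum_sub_distrib, ← mul_sum, sum_ite_mem, inter_eq_right.2 hA]

/-- The set `{1 ≤ j ≤ L : x + lj ∈ A}`, i.e. the part of `A` on a progression rescaled to
`{1, …, L}`. -/
noncomputable def progressionPreimage (A : Finset ℕ) (l L : ℕ) (x : ℤ) : Finset ℕ :=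
  {j ∈ Icc 1 L | x + l * j ∈ A.map Nat.castEmbedding}

lemma card_progressionPreimage (l L : ℕ) (x : ℤ) :
    (#(progressionPreimage A l L x) : ℝ) =
      progressionSum (((A.map Nat.castEmbedding : Finset ℤ) : Set ℤ).indicator 1) l L x := by
  simp only [progressionPreimage, progressionSum, Set.indicator_apply, mem_coe, Pi.one_apply,
    sum_boole]

theorem exists_progressionPreimage_density_ge (hN : N ≠ 0) (hA : A ⊆ Icc 1 N) {l q : ℕ}
    (hl : l ≠ 0) (hql : q ∣ l) {ν K : ℝ} (hK : 1 ≤ K) (hν : 64 * K * l ≤ ν * (#A / N) * N)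
    (henergy : ν * (#A / N) * #A ≤ arcEnergy q (K / N) fun γ ↦
      ∑ n ∈ A, e (n * γ) - ((#A / N : ℝ) : ℂ) * ∑ n ∈ Icc 1 N, e (n * γ)) :
    ∃ L : ℕ, 0 < L ∧ 1 / 128 * ν * (#A / N) * N / (K * l) ≤ L ∧
      ∃ x, (1 + ν / 73) * (#A / N) ≤ #(progressionPreimage A l L x) / L := by
  have hcard : #(A.map (Nat.castEmbedding : ℕ ↪ ℤ)) = #A := card_map _
  simp only [← expSum_balanced_map_castEmbedding hA] at henergy
  rw [← hcard] at hν henergy ⊢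
  obtain ⟨L, hL0, hLge, x, hx⟩ := exists_length_progressionSum_indicator_ge hN
    (map_castEmbedding_subset_Icc hA) hl hql hK hν henergy
  refine ⟨L, hL0, hLge, x, ?_⟩
  rwa [le_div_iff₀ (by positivity), card_progressionPreimage]

end NaturalSets

end CircleMethod

section AuxiliaryPolynomials

open Polynomial Finset

/-- A set `A` is `g`-free: no two distinct elements of `A` differ by a value of `g` at a positive
integer. -/
def IsDifferenceFree (g : ℤ[X]) (A : Finset ℕ) : Prop :=
  ∀ a ∈ A, ∀ b ∈ A, a ≠ b → ∀ n : ℕ, 0 < n → (a : ℤ) - b ≠ g.eval (n : ℤ)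

lemma IsDifferenceFree.progressionPreimage {g g' : ℤ[X]} {A : Finset ℕ} (hA : IsDifferenceFree g A)
    {l : ℕ} (hl : l ≠ 0)
    (hval : ∀ n : ℕ, 0 < n → ∃ m : ℕ, 0 < m ∧ (l : ℤ) * g'.eval (n : ℤ) = g.eval (m : ℤ))
    (L : ℕ) (x : ℤ) : IsDifferenceFree g' (progressionPreimage A l L x) := by
  intro i hi j hj hij n hn heq
  obtain ⟨a, ha, hai⟩ := mem_map.1 (mem_filter.1 hi).2
  obtain ⟨b, hb, hbj⟩ := mem_map.1 (mem_filter.1 hj).2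
  obtain ⟨m, hm, hmn⟩ := hval n hn
  rw [Nat.castEmbedding_apply] at hai hbj
  have hab : (a : ℤ) - b = l * (i - j) := by rw [hai, hbj]; ring
  refine hA a ha b hb ?_ m hm (by rw [hab, heq, hmn])
  rintro rfl
  have hij' : (l : ℤ) * (i - j) ≠ 0 := mul_ne_zero (by exact_mod_cast hl) (by omega)
  exact hij' (by rw [← hab, sub_self])

lemma dvd_map_of_forall_prime_dvd (f : ℕ →* ℕ) (hf : ∀ p, p.Prime → p ∣ f p) {n : ℕ} (hn : n ≠ 0) :
    n ∣ f n := by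
  induction n using Nat.recOnMul with
  | zero => exact absurd rfl hn
  | one => exact one_dvd _
  | prime p hp => exact hf p hp
  | mul a b iha ihb =>
    rw [map_mul]
    exact mul_dvd_mul (iha (left_ne_zero_of_mul hn)) (ihb (right_ne_zero_of_mul hn))

lemma map_ne_zero_of_forall_prime (f : ℕ →* ℕ) (hf : ∀ p, p.Prime → f p ≠ 0) {n : ℕ}
    (hn : n ≠ 0) : f n ≠ 0 := by
  induction n using Nat.recOnMul with
  | zero => exact absurd rfl hn
  | one => simp
  | prime p hp => exact hf p hp
  | mul a b iha ihb =>
    rw [map_mul]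
    exact mul_ne_zero (iha (left_ne_zero_of_mul hn)) (ihb (right_ne_zero_of_mul hn))

lemma rootMultiplicity_map_padicInt_ne_zero {p : ℕ} [Fact p.Prime] {h : ℤ[X]} (h0 : h ≠ 0)
    {z : ℤ_[p]} (hz : aeval z h = 0) : (h.map (algebraMap ℤ ℤ_[p])).rootMultiplicity z ≠ 0 := by
  have hmap : h.map (algebraMap ℤ ℤ_[p]) ≠ 0 :=
    (Polynomial.map_ne_zero_iff (algebraMap ℤ ℤ_[p]).injective_int).2 h0
  rw [← Nat.pos_iff_ne_zero, rootMultiplicity_pos hmap, IsRoot, eval_map_algebraMap]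
  exact hz

lemma natCast_dvd_sub_of_padic_congr {z : ∀ (p : ℕ) [Fact p.Prime], ℤ_[p]} {d : ℕ} {a b : ℤ}
    (ha : ∀ (p : ℕ) [Fact p.Prime] (α : ℕ), p ^ α ∣ d → (p : ℤ_[p]) ^ α ∣ z p - a)
    (hb : ∀ (p : ℕ) [Fact p.Prime] (α : ℕ), p ^ α ∣ d → (p : ℤ_[p]) ^ α ∣ z p - b) :
    (d : ℤ) ∣ a - b := by
  rw [Int.natCast_dvd, Nat.dvd_iff_prime_pow_dvd_dvd]
  intro p α hp hα
  have : Fact p.Prime := ⟨hp⟩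
  rw [← Int.natCast_dvd, Nat.cast_pow, ← PadicInt.pow_p_dvd_int_iff, Int.cast_sub]
  simpa only [sub_sub_sub_cancel_left] using dvd_sub (hb p α hα) (ha p α hα)

-- `h (b + qdn) = h (a + dm)` for `m = (b - a) / d + qn`.
lemma exists_mul_eval_eq_eval {h g g' : ℤ[X]} {c d l q : ℕ} {a b : ℤ} (hc : c ≠ 0)
    (hd : 0 < d) (ha : a ≤ 0) (hb : -((q * d : ℕ) : ℤ) < b) (hdvd : (d : ℤ) ∣ b - a)
    (hg : C (c : ℤ) * g = h.comp (C a + C (d : ℤ) * X))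
    (hg' : C ((l * c : ℕ) : ℤ) * g' = h.comp (C b + C ((q * d : ℕ) : ℤ) * X)) {n : ℕ}
    (hn : 0 < n) : ∃ m : ℕ, 0 < m ∧ (l : ℤ) * g'.eval (n : ℤ) = g.eval (m : ℤ) := by
  obtain ⟨u, hu⟩ := hdvd
  have hpos : 0 < u + q * n := by
    refine pos_of_mul_pos_right (a := (d : ℤ)) ?_ (by positivity)
    have hqd : ((q * d : ℕ) : ℤ) ≤ (q * d : ℕ) * n :=
      le_mul_of_one_le_right (by positivity) (by exact_mod_cast hn)
    push_cast at hqd hb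
    linarith
  lift u + q * n to ℕ using hpos.le with m hm
  refine ⟨m, by exact_mod_cast hpos, ?_⟩
  have hg_m := congrArg (eval (m : ℤ)) hg
  have hg'_n := congrArg (eval (n : ℤ)) hg'
  have harg : b + ((q * d : ℕ) : ℤ) * n = a + d * m := by
    rw [hm]
    push_cast
    linear_combination hu
  simp only [eval_mul, eval_C, eval_comp, eval_add, eval_X] at hg_m hg'_n
  refine mul_left_cancel₀ (Nat.cast_ne_zero.2 hc : (c : ℤ) ≠ 0) ?_
  rw [hg_m, ← harg, ← hg'_n]
  push_cast
  ring

theorem stmt14_general {h : ℤ[X]} (h0 : h ≠ 0) (z : ∀ (p : ℕ) [Fact p.Prime], ℤ_[p])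
    (hz : ∀ (p : ℕ) [Fact p.Prime], aeval (z p) h = 0) (lam : ℕ →* ℕ)
    (hlam : ∀ (p : ℕ) [Fact p.Prime],
      lam p = p ^ (h.map (algebraMap ℤ ℤ_[p])).rootMultiplicity (z p))
    (r : ℕ → ℤ) (hr : ∀ d : ℕ, 0 < d → -(d : ℤ) < r d ∧ r d ≤ 0)
    (hrz : ∀ d : ℕ, 0 < d → ∀ (p : ℕ) [Fact p.Prime], ∀ α : ℕ, p ^ α ∣ d →
      (p : ℤ_[p]) ^ α ∣ z p - r d)
    (H : ℕ → ℤ[X])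
    (hH : ∀ d : ℕ, 0 < d → C (lam d : ℤ) * H d = h.comp (C (r d) + C (d : ℤ) * X))
    {d N : ℕ} (hd : 0 < d) (hN : 0 < N) {A : Finset ℕ} (hA : A ⊆ Icc 1 N)
    (hfree : IsDifferenceFree (H d) A) {ν K : ℝ} (hK : 1 ≤ K) {q : ℕ} (hq : 1 ≤ q)
    (hν : 64 * K * lam q ≤ ν * (#A / N) * N)
    (henergy : ν * (#A / N) * #A ≤ arcEnergy q (K / N) fun γ ↦
      ∑ n ∈ A, e (n * γ) - ((#A / N : ℝ) : ℂ) * ∑ n ∈ Icc 1 N, e (n * γ)) :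
    ∃ Nst : ℕ, 0 < Nst ∧ 1 / 128 * ν * (#A / N) * N / (K * lam q) ≤ Nst ∧
      ∃ Ast ⊆ Icc 1 Nst, IsDifferenceFree (H (q * d)) Ast ∧
        (#Ast : ℝ) / Nst ≥ (1 + ν / 73) * (#A / N) := by
  have lam_ne_zero {n : ℕ} (hn : n ≠ 0) : lam n ≠ 0 :=
    map_ne_zero_of_forall_prime lam (fun p hp ↦ have : Fact p.Prime := ⟨hp⟩
      hlam p ▸ pow_ne_zero _ hp.ne_zero) hn
  have dvd_lam : q ∣ lam q :=
    dvd_map_of_forall_prime_dvd lam (fun p hp ↦ have : Fact p.Prime := ⟨hp⟩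
      hlam p ▸ dvd_pow_self p (rootMultiplicity_map_padicInt_ne_zero h0 (hz p))) (by omega)
  obtain ⟨L, hL, hLge, x, hx⟩ := exists_progressionPreimage_density_ge hN.ne' hA
    (lam_ne_zero (by omega)) dvd_lam hK hν henergy
  have hqd : 0 < q * d := by positivity
  have hdvd : (d : ℤ) ∣ r (q * d) - r d :=
    natCast_dvd_sub_of_padic_congr (fun p _ α hα ↦ hrz _ hqd p α (hα.mul_left q)) (hrz d hd)
  refine ⟨L, hL, hLge, _, filter_subset _ _, ?_, hx⟩
  exact hfree.progressionPreimage (lam_ne_zero (by omega)) (fun n hn ↦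
    exists_mul_eval_eq_eval (lam_ne_zero hd.ne') hd (hr d hd).2 (hr _ hqd).1 hdvd (hH d hd)
      (map_mul lam q d ▸ hH _ hqd) hn) L x

end AuxiliaryPolynomials

open scoped Classical in
/-- Lemma 5.1 (`L²` density increment): if the `L²` mass of `1̂_A - σ·1̂_{[N]}` on the arcs
`𝔐_{a,q}(N,K)` is at least `ν·σ·|A|`, then there is a longer-scale `h_{qd}`-free subset with
density increased by a factor `1 + ν/73`. -/
theorem stmt14
    (k : ℕ) (hk : 0 < k)
    (h : Polynomial ℤ) (hdeg : h.natDegree = k) (hlead : 0 < h.leadingCoeff)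
    (hint : ∀ q : ℕ, 0 < q → ∃ n : ℤ, (q : ℤ) ∣ h.eval n)
    (z : ∀ (p : ℕ) [Fact p.Prime], ℤ_[p])
    (hz : ∀ (p : ℕ) [Fact p.Prime], Polynomial.aeval (z p) h = 0)
    (lam : ℕ → ℕ) (hlam1 : lam 1 = 1)
    (hlamMul : ∀ a b : ℕ, lam (a * b) = lam a * lam b)
    (hlamP : ∀ (p : ℕ) [Fact p.Prime],
      lam p = p ^ Polynomial.rootMultiplicity (z p) (h.map (algebraMap ℤ ℤ_[p])))
    (r : ℕ → ℤ)
    (hr : ∀ d : ℕ, 0 < d → -(d : ℤ) < r d ∧ r d ≤ 0)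
    (hrz : ∀ d : ℕ, 0 < d → ∀ (p : ℕ) [Fact p.Prime], ∀ α : ℕ, p ^ α ∣ d →
      (p : ℤ_[p]) ^ α ∣ (z p - (r d : ℤ_[p])))
    (H : ℕ → Polynomial ℤ)
    (hH : ∀ d : ℕ, 0 < d →
      Polynomial.C (lam d : ℤ) * H d =
        h.comp (Polynomial.C (r d) + Polynomial.C (d : ℤ) * Polynomial.X))
    :
    ∃ C₀ c₀ : ℝ, 1 ≤ C₀ ∧ 0 < c₀ ∧
      ∀ d N : ℕ, 0 < d → 0 < N → ∀ A : Finset ℕ, A ⊆ Finset.Icc 1 N →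
        (∀ a ∈ A, ∀ b ∈ A, a ≠ b →
          ∀ n : ℕ, 0 < n → (a : ℤ) - (b : ℤ) ≠ (H d).eval (n : ℤ)) →
        let σ : ℝ := (A.card : ℝ) / N
        let ghat : ℝ → ℂ := fun γ =>
          (∑ n ∈ A, e ((n : ℝ) * γ)) - (σ : ℂ) * ∑ n ∈ Finset.Icc 1 N, e ((n : ℝ) * γ)
        ∀ ν : ℝ, 0 ≤ ν → ν < 1 → ∀ K : ℝ, 1 ≤ K → ∀ q : ℕ, 1 ≤ q →
          C₀ * K * (lam q : ℝ) ≤ ν * σ * N →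
          (∑ a ∈ (Finset.Icc 1 q).filter (fun a => Nat.gcd a q = 1),
              ∫ γ in Set.Icc ((a : ℝ) / q - K / N) ((a : ℝ) / q + K / N), ‖ghat γ‖ ^ 2) ≥
            ν * σ * A.card →
          ∃ Nst : ℕ, 0 < Nst ∧ c₀ * ν * σ * N / (K * (lam q : ℝ)) ≤ (Nst : ℝ) ∧
            ∃ Ast : Finset ℕ, Ast ⊆ Finset.Icc 1 Nst ∧
              (∀ a ∈ Ast, ∀ b ∈ Ast, a ≠ b →
                ∀ n : ℕ, 0 < n → (a : ℤ) - (b : ℤ) ≠ (H (q * d)).eval (n : ℤ)) ∧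
              (Ast.card : ℝ) / Nst ≥ (1 + ν / 73) * σ := by
  refine ⟨64, 1 / 128, by norm_num, by norm_num, ?_⟩
  intro d N hd hN A hA hfree σ ghat ν _ _ K hK q hq hν henergy
  have h0 : h ≠ 0 := Polynomial.leadingCoeff_ne_zero.1 hlead.ne'
  have energy_le : ν * σ * A.card ≤ arcEnergy q (K / N) ghat :=
    henergy.le.trans <| Finset.sum_le_sum_of_subset_of_nonneg (Finset.filter_subset _ _)
      fun _ _ _ ↦ MeasureTheory.integral_nonneg fun _ ↦ by positivity
  exact stmt14_general h0 z hz ⟨⟨lam, hlam1⟩, hlamMul⟩ hlamP r hr hrz H hH hd hN hA hfree hK hq hν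
    energy_le
end

section
/- There is an absolute constant C > 0 such that the following holds. Let Q ≥ 4, let m ≥ 2 be an integer, and let n be a positive integer. Let S ⊆ 𝕋 be a finite set of rational points, each representable as a/q with integers 1 ≤ a ≤ q ≤ Q, such that S is contained in an interval of length 1/(8m) in 𝕋 and, for every q ≤ Q, at most n elements of S have denominator q. Then E_{2m}(S;0) ≤ (log Q)^{C^m}·(Q·n)^m. -/
/-- The distance from `x` to the nearest integer, i.e. the norm of the image of `x` in
`𝕋 = ℝ/ℤ`. -/
noncomputable def torusNorm (x : ℝ) : ℝ := |x - round x|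
/-- The additive energy `E_{2m}(S;δ)`: the number of `2m`-tuples `(b₁,…,b_{2m}) ∈ S^{2m}`
with `‖b₁ + ⋯ + b_m − b_{m+1} − ⋯ − b_{2m}‖ ≤ δ` in `𝕋 = ℝ/ℤ`. -/
noncomputable def energy (m : ℕ) (S : Finset ℝ) (δ : ℝ) : ℕ := by
  classical
  exact ((Fintype.piFinset fun _ : Fin (2 * m) => S).filter
    (fun b => torusNorm (∑ i : Fin (2 * m), if (i : ℕ) < m then b i else -b i) ≤ δ)).card

/-- The denominator of a rational point of `𝕋`: the least `q ≥ 1` with `x·q ∈ ℤ`. -/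
noncomputable def den (x : ℝ) : ℕ := sInf {q : ℕ | 0 < q ∧ ∃ a : ℤ, x * q = (a : ℝ)}

/-!
Fix the orders `q i` of the coordinates and let `X` be the set of zero-sum tuples with these
orders. By the zero-sum condition, `(lcm of the q j with j > i) • x i` depends only on the earlier
coordinates of `x ∈ X`, and `(lcm of the q j with j < i) • x i` only on the later ones. Applying
submodularity of entropy along both orderings of the coordinates, with `x` uniform on `X`, gives
`|X|² ≤ ∏ i, |X_i| * gcd (q i) (lcm above i) (lcm below i)`, where `X_i` is the projection of `X`.
As `q i` divides the lcm of the other orders, that gcd is at most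
`gcd (q i) (lcm above i) * gcd (q i) (lcm below i) / q i`. Since the products
`(∏ i, gcd (q i) (lcm below i)) * lcm q` and `(∏ i, gcd (q i) (lcm above i)) * lcm q` telescope to
`∏ i, q i`, it follows that `|X| ≤ √(∏ i, |X_i| * q i) / lcm q`.

It remains to sum `1 / lcm q` over all order tuples `q` of length `k`. At most `τ(l) ^ k` of them
have lcm `l`, and submultiplicativity of `τ` gives `∑ τ(l) ^ k / l ≤ (∑ 1 / l) ^ (2 ^ k)`.
-/

open Finset
open scoped BigOperators

/-! ### Entropy of functions on a finite set -/

section Entropy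

variable {Ω α β γ : Type*} {X : Finset Ω} {f : Ω → α} {g : Ω → β} {h : Ω → γ} {x y : Ω}

open scoped Classical in
/-- The fibre of `f` through `x`, within the finite set `X`. -/
noncomputable def fiberThrough (X : Finset Ω) (f : Ω → α) (x : Ω) : Finset Ω :=
  {y ∈ X | f y = f x}

lemma mem_fiberThrough : y ∈ fiberThrough X f x ↔ y ∈ X ∧ f y = f x := by
  simp [fiberThrough]

lemma mem_fiberThrough_comm :
    x ∈ X ∧ y ∈ fiberThrough X f x ↔ x ∈ fiberThrough X f y ∧ y ∈ X := by
  simp only [mem_fiberThrough, eq_comm (a := f x)]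
  tauto

lemma fiberThrough_subset : fiberThrough X f x ⊆ X := fun _ hy => (mem_fiberThrough.1 hy).1

lemma fiberThrough_congr (hxy : f x = f y) : fiberThrough X f x = fiberThrough X f y := by
  rw [fiberThrough, fiberThrough, hxy]

lemma card_fiberThrough_pos (f : Ω → α) (hx : x ∈ X) : (0 : ℝ) < #(fiberThrough X f x) := by
  exact_mod_cast card_pos.2 ⟨x, mem_fiberThrough.2 ⟨hx, rfl⟩⟩

lemma sum_inv_card_fiberThrough_le [DecidableEq α] {T : Finset Ω} (hT : T ⊆ X) :
    ∑ x ∈ T, (#(fiberThrough X f x) : ℝ)⁻¹ ≤ #(T.image f) := by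
  classical
  rw [← sum_fiberwise_of_maps_to (fun x => mem_image_of_mem f), card_eq_sum_ones, Nat.cast_sum]
  refine sum_le_sum fun a _ => ?_
  calc ∑ x ∈ T with f x = a, (#(fiberThrough X f x) : ℝ)⁻¹
      ≤ ∑ x ∈ T with f x = a, (#{x ∈ T | f x = a} : ℝ)⁻¹ := by
        refine sum_le_sum fun x hx => inv_anti₀ (by exact_mod_cast card_pos.2 ⟨x, hx⟩) ?_
        refine Nat.cast_le.2 (card_le_card fun y hy => ?_)
        rw [mem_filter] at hx hy
        exact mem_fiberThrough.2 ⟨hT hy.1, hy.2.trans hx.2.symm⟩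
    _ ≤ (1 : ℕ) := by
        rw [sum_const, nsmul_eq_mul, Nat.cast_one]
        exact mul_inv_le_one

/-- The Shannon entropy, in nats, of the random variable `f x` for `x` uniform on `X`, written as
the average over `X` of the information `log (#X / #(fibre of f through x))`. It is `0` for empty
`X`. -/
noncomputable def shannonEntropy (X : Finset Ω) (f : Ω → α) : ℝ :=
  𝔼 x ∈ X, Real.log (#X / #(fiberThrough X f x))

lemma expect_log_le_log_expect {w : Ω → ℝ} (hw : ∀ x ∈ X, 0 < w x) :
    𝔼 x ∈ X, Real.log (w x) ≤ Real.log (𝔼 x ∈ X, w x) := by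
  obtain rfl | hX := X.eq_empty_or_nonempty
  · simp
  have hcard : (#X : ℝ) ≠ 0 := by exact_mod_cast hX.card_ne_zero
  have jensen := strictConcaveOn_log_Ioi.concaveOn.le_map_sum (t := X) (w := fun _ => (#X : ℝ)⁻¹)
    (p := w) (fun _ _ => by positivity) (by simp [hcard]) hw
  simpa only [expect_eq_sum_div_card, div_eq_inv_mul, mul_sum, smul_eq_mul] using jensen

lemma shannonEntropy_eq_log_card_sub (X : Finset Ω) (f : Ω → α) :
    shannonEntropy X f = Real.log #X - 𝔼 x ∈ X, Real.log #(fiberThrough X f x) := by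
  obtain rfl | hX := X.eq_empty_or_nonempty
  · simp [shannonEntropy]
  rw [shannonEntropy, ← expect_const hX (Real.log #X), ← expect_sub_distrib]
  refine expect_congr rfl fun x hx => Real.log_div ?_ (card_fiberThrough_pos f hx).ne'
  exact_mod_cast hX.card_ne_zero

lemma shannonEntropy_congr (hfg : ∀ x ∈ X, ∀ y ∈ X, f y = f x ↔ g y = g x) :
    shannonEntropy X f = shannonEntropy X g := by
  classical
  exact expect_congr rfl fun x hx => by rw [fiberThrough, fiberThrough, filter_congr (hfg x hx)]

lemma shannonEntropy_of_injOn (hf : Set.InjOn f X) : shannonEntropy X f = Real.log #X := by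
  rw [shannonEntropy_eq_log_card_sub, sub_eq_self]
  refine expect_eq_zero fun x hx => ?_
  have hfiber : fiberThrough X f x = {x} := by
    ext y
    rw [mem_fiberThrough, mem_singleton]
    exact ⟨fun hy => hf hy.1 hx hy.2, by rintro rfl; exact ⟨hx, rfl⟩⟩
  simp [hfiber]

lemma shannonEntropy_const (X : Finset Ω) (a : α) : shannonEntropy X (fun _ => a) = 0 := by
  obtain rfl | hX := X.eq_empty_or_nonempty <;>
    simp [shannonEntropy_eq_log_card_sub, fiberThrough, *]

lemma sum_card_fiberThrough_div_le [DecidableEq α] {c : ℕ}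
    (hc : ∀ x ∈ X, #((fiberThrough X g x).image f) ≤ c) :
    ∑ x ∈ X, (#(fiberThrough X g x) / #(fiberThrough X f x) : ℝ) ≤ #X * c :=
  calc ∑ x ∈ X, (#(fiberThrough X g x) / #(fiberThrough X f x) : ℝ)
      = ∑ x ∈ X, ∑ _y ∈ fiberThrough X g x, (#(fiberThrough X f x) : ℝ)⁻¹ := by
        simp only [sum_const, nsmul_eq_mul, div_eq_mul_inv]
    _ = ∑ y ∈ X, ∑ x ∈ fiberThrough X g y, (#(fiberThrough X f x) : ℝ)⁻¹ :=
        sum_comm' fun _ _ => mem_fiberThrough_comm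
    _ ≤ ∑ _y ∈ X, (c : ℝ) := sum_le_sum fun y hy =>
        (sum_inv_card_fiberThrough_le fiberThrough_subset).trans (by exact_mod_cast hc y hy)
    _ = #X * c := by simp

lemma shannonEntropy_le_add_log [DecidableEq α] {c : ℕ}
    (hc : ∀ x ∈ X, #((fiberThrough X g x).image f) ≤ c) :
    shannonEntropy X f ≤ shannonEntropy X g + Real.log c := by
  obtain rfl | hX := X.eq_empty_or_nonempty
  · simpa [shannonEntropy] using Real.log_natCast_nonneg c
  have ratio_pos : ∀ x ∈ X, (0 : ℝ) < #(fiberThrough X g x) / #(fiberThrough X f x) :=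
    fun x hx => div_pos (card_fiberThrough_pos g hx) (card_fiberThrough_pos f hx)
  have expect_ratio_le : 𝔼 x ∈ X, (#(fiberThrough X g x) / #(fiberThrough X f x) : ℝ) ≤ c := by
    rw [expect_eq_sum_div_card, div_le_iff₀' (by exact_mod_cast hX.card_pos)]
    exact sum_card_fiberThrough_div_le hc
  have expect_log_ratio_le :
      𝔼 x ∈ X, Real.log (#(fiberThrough X g x) / #(fiberThrough X f x)) ≤ Real.log c :=
    (expect_log_le_log_expect ratio_pos).trans
      (Real.log_le_log (expect_pos ratio_pos hX) expect_ratio_le)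
  rw [expect_congr rfl fun x hx => Real.log_div (card_fiberThrough_pos g hx).ne'
    (card_fiberThrough_pos f hx).ne', expect_sub_distrib] at expect_log_ratio_le
  rw [shannonEntropy_eq_log_card_sub, shannonEntropy_eq_log_card_sub]
  linarith

lemma shannonEntropy_le_log_card_image [DecidableEq α] (X : Finset Ω) (f : Ω → α) :
    shannonEntropy X f ≤ Real.log #(X.image f) := by
  simpa only [shannonEntropy_const, zero_add] using
    shannonEntropy_le_add_log (X := X) (f := f) (g := fun _ => ())
      fun _ _ => card_le_card (image_subset_image fiberThrough_subset)

lemma sum_fiberThrough_div_le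
    (hf : ∀ x ∈ X, ∀ y ∈ X, f x = f y → h x = h y)
    (hg : ∀ x ∈ X, ∀ y ∈ X, g x = g y → h x = h y) (hy : y ∈ X) :
    ∑ x ∈ fiberThrough X f y,
      (#(fiberThrough X g x) / #(fiberThrough X (fun x => (f x, g x)) x) : ℝ) ≤
        #(fiberThrough X h y) := by
  classical
  let P (x : Ω) : ℝ := #(fiberThrough X (fun x => (f x, g x)) x)
  calc ∑ x ∈ fiberThrough X f y, #(fiberThrough X g x) / P x
      = ∑ x ∈ fiberThrough X f y, ∑ _z ∈ fiberThrough X g x, (P x)⁻¹ := by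
        simp only [sum_const, nsmul_eq_mul, div_eq_mul_inv]
    _ = ∑ z ∈ fiberThrough X h y, ∑ x ∈ fiberThrough X f y ∩ fiberThrough X g z, (P x)⁻¹ := by
        refine sum_comm' fun x z => ?_
        simp only [mem_inter, mem_fiberThrough]
        constructor
        · rintro ⟨⟨hx, hfx⟩, hz, hgz⟩
          exact ⟨⟨⟨hx, hfx⟩, hx, hgz.symm⟩, hz, (hg z hz x hx hgz).trans (hf x hx y hy hfx)⟩
        · rintro ⟨⟨hfx, -, hgz⟩, hz, -⟩
          exact ⟨hfx, hz, hgz.symm⟩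
    _ ≤ ∑ _z ∈ fiberThrough X h y, 1 := by
        refine sum_le_sum fun z _ => (sum_inv_card_fiberThrough_le
          (inter_subset_left.trans fiberThrough_subset)).trans (Nat.cast_le_one.2 ?_)
        rw [card_le_one]
        simp only [mem_image, mem_inter, mem_fiberThrough]
        rintro _ ⟨x, ⟨⟨-, hfx⟩, -, hgx⟩, rfl⟩ _ ⟨x', ⟨⟨-, hfx'⟩, -, hgx'⟩, rfl⟩
        rw [hfx, hgx, hfx', hgx']
    _ = #(fiberThrough X h y) := by simp

lemma sum_card_fiberThrough_mul_div_le
    (hf : ∀ x ∈ X, ∀ y ∈ X, f x = f y → h x = h y)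
    (hg : ∀ x ∈ X, ∀ y ∈ X, g x = g y → h x = h y) :
    ∑ x ∈ X, (#(fiberThrough X f x) * #(fiberThrough X g x) : ℝ) /
      (#(fiberThrough X (fun x => (f x, g x)) x) * #(fiberThrough X h x)) ≤ #X := by
  let F (x : Ω) : ℝ := #(fiberThrough X f x)
  let G (x : Ω) : ℝ := #(fiberThrough X g x)
  let H (x : Ω) : ℝ := #(fiberThrough X h x)
  let P (x : Ω) : ℝ := #(fiberThrough X (fun x => (f x, g x)) x)
  calc ∑ x ∈ X, F x * G x / (P x * H x)
      = ∑ x ∈ X, ∑ _y ∈ fiberThrough X f x, (H x)⁻¹ * (G x / P x) := by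
        simp only [sum_const, nsmul_eq_mul]
        exact sum_congr rfl fun x _ => by ring
    _ = ∑ y ∈ X, ∑ x ∈ fiberThrough X f y, (H x)⁻¹ * (G x / P x) :=
        sum_comm' fun _ _ => mem_fiberThrough_comm
    _ = ∑ y ∈ X, (H y)⁻¹ * ∑ x ∈ fiberThrough X f y, G x / P x := by
        refine sum_congr rfl fun y hy => ?_
        rw [mul_sum]
        refine sum_congr rfl fun x hx => ?_
        obtain ⟨hx, hfx⟩ := mem_fiberThrough.1 hx
        simp only [H, fiberThrough_congr (hf x hx y hy hfx)]
    _ ≤ ∑ y ∈ X, (H y)⁻¹ * H y := by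
        gcongr with y hy
        exact sum_fiberThrough_div_le hf hg hy
    _ = #X := by
        rw [card_eq_sum_ones, Nat.cast_sum, Nat.cast_one]
        exact sum_congr rfl fun y hy => inv_mul_cancel₀ (card_fiberThrough_pos h hy).ne'

lemma shannonEntropy_prodMk_add_le
    (hf : ∀ x ∈ X, ∀ y ∈ X, f x = f y → h x = h y)
    (hg : ∀ x ∈ X, ∀ y ∈ X, g x = g y → h x = h y) :
    shannonEntropy X (fun x => (f x, g x)) + shannonEntropy X h
      ≤ shannonEntropy X f + shannonEntropy X g := by
  let F (x : Ω) : ℝ := #(fiberThrough X f x)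
  let G (x : Ω) : ℝ := #(fiberThrough X g x)
  let H (x : Ω) : ℝ := #(fiberThrough X h x)
  let P (x : Ω) : ℝ := #(fiberThrough X (fun x => (f x, g x)) x)
  have hF : ∀ x ∈ X, 0 < F x := fun x => card_fiberThrough_pos f
  have hG : ∀ x ∈ X, 0 < G x := fun x => card_fiberThrough_pos g
  have hH : ∀ x ∈ X, 0 < H x := fun x => card_fiberThrough_pos h
  have hP : ∀ x ∈ X, 0 < P x := fun x => card_fiberThrough_pos _
  have ratio_pos : ∀ x ∈ X, 0 < F x * G x / (P x * H x) := fun x hx =>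
    div_pos (mul_pos (hF x hx) (hG x hx)) (mul_pos (hP x hx) (hH x hx))
  have expect_ratio_le : 𝔼 x ∈ X, F x * G x / (P x * H x) ≤ 1 := by
    rw [expect_eq_sum_div_card]
    exact div_le_one_of_le₀ (sum_card_fiberThrough_mul_div_le hf hg) (Nat.cast_nonneg _)
  have expect_log_ratio_le : 𝔼 x ∈ X, Real.log (F x * G x / (P x * H x)) ≤ 0 :=
    (expect_log_le_log_expect ratio_pos).trans
      (Real.log_nonpos (expect_nonneg fun x hx => (ratio_pos x hx).le) expect_ratio_le)
  rw [expect_congr rfl fun x hx => by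
      rw [Real.log_div (mul_pos (hF x hx) (hG x hx)).ne' (mul_pos (hP x hx) (hH x hx)).ne',
        Real.log_mul (hF x hx).ne' (hG x hx).ne', Real.log_mul (hP x hx).ne' (hH x hx).ne'],
    expect_sub_distrib, expect_add_distrib, expect_add_distrib] at expect_log_ratio_le
  simp only [shannonEntropy_eq_log_card_sub]
  linarith

lemma shannonEntropy_prodMk_le (X : Finset Ω) (f : Ω → α) (g : Ω → β) :
    shannonEntropy X (fun x => (f x, g x)) ≤ shannonEntropy X f + shannonEntropy X g := by
  simpa only [shannonEntropy_const, add_zero] using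
    shannonEntropy_prodMk_add_le (X := X) (f := f) (g := g) (h := fun _ => ())
      (fun _ _ _ _ _ => rfl) (fun _ _ _ _ _ => rfl)

lemma two_mul_shannonEntropy_le [DecidableEq α] {c : ℕ}
    (hc : ∀ x ∈ X, #((fiberThrough X (fun x => (g x, h x)) x).image f) ≤ c) :
    2 * shannonEntropy X f ≤ shannonEntropy X g + shannonEntropy X h
      + (Real.log #(X.image f) + Real.log c) := by
  have hcond := shannonEntropy_le_add_log hc
  have himage := shannonEntropy_le_log_card_image X f
  have hpair := shannonEntropy_prodMk_le X g h
  linarith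

end Entropy

section ChainRule

variable {ι α β γ : Type*} [LinearOrder ι] {X : Finset (ι → α)}

lemma shannonEntropy_restrict_add_sum_le (s : Finset ι) {g : ι → α → β}
    (hg : ∀ i ∈ s, ∀ x ∈ X, ∀ y ∈ X, (∀ j ∈ s, j < i → x j = y j) → g i (x i) = g i (y i)) :
    shannonEntropy X s.restrict + ∑ i ∈ s, shannonEntropy X (fun x => g i (x i))
      ≤ ∑ i ∈ s, shannonEntropy X (fun x => x i) := by
  induction s using Finset.induction_on_max with
  | empty =>
    rw [shannonEntropy_congr (g := fun _ => ()) fun _ _ _ _ => by simp [funext_iff],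
      shannonEntropy_const]
    simp
  | insert a s ha ih =>
    have ha' : a ∉ s := fun h => lt_irrefl a (ha a h)
    have hsplit : shannonEntropy X (insert a s).restrict
        = shannonEntropy X (fun x => (s.restrict x, x a)) :=
      shannonEntropy_congr fun _ _ _ _ => by simp [funext_iff, and_comm]
    have hstep : shannonEntropy X (fun x => (s.restrict x, x a))
        + shannonEntropy X (fun x => g a (x a))
        ≤ shannonEntropy X s.restrict + shannonEntropy X (fun x => x a) :=
      shannonEntropy_prodMk_add_le
        (fun x hx y hy hxy => hg a (mem_insert_self a s) x hx y hy fun j hj hja =>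
          congrFun hxy ⟨j, (mem_insert.1 hj).resolve_left hja.ne⟩)
        (fun x _ y _ hxy => congrArg (g a) hxy)
    have hrest := ih fun i hi x hx y hy hxy =>
      hg i (mem_insert_of_mem hi) x hx y hy fun j hj hji =>
        hxy j ((mem_insert.1 hj).resolve_left (hji.trans (ha i hi)).ne) hji
    rw [sum_insert ha', sum_insert ha', hsplit]
    linarith

variable [Fintype ι]

lemma log_card_add_sum_shannonEntropy_le {g : ι → α → β}
    (hg : ∀ i, ∀ x ∈ X, ∀ y ∈ X, (∀ j < i, x j = y j) → g i (x i) = g i (y i)) :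
    Real.log #X + ∑ i, shannonEntropy X (fun x => g i (x i))
      ≤ ∑ i, shannonEntropy X (fun x => x i) := by
  have hinj : Set.InjOn (univ : Finset ι).restrict (X : Set (ι → α)) := fun x _ y _ hxy =>
    funext fun i => congrFun hxy ⟨i, mem_univ i⟩
  rw [← shannonEntropy_of_injOn hinj]
  exact shannonEntropy_restrict_add_sum_le univ fun i _ x hx y hy hxy =>
    hg i x hx y hy fun j => hxy j (mem_univ j)

lemma two_mul_log_card_le [DecidableEq α] {g : ι → α → β} {h : ι → α → γ} {c : ι → ℕ}
    (hg : ∀ i, ∀ x ∈ X, ∀ y ∈ X, (∀ j < i, x j = y j) → g i (x i) = g i (y i))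
    (hh : ∀ i, ∀ x ∈ X, ∀ y ∈ X, (∀ j > i, x j = y j) → h i (x i) = h i (y i))
    (hc : ∀ i, ∀ x ∈ X,
      #((fiberThrough X (fun x => (g i (x i), h i (x i))) x).image (fun x => x i)) ≤ c i) :
    2 * Real.log #X ≤ ∑ i, (Real.log #(X.image fun x => x i) + Real.log (c i)) := by
  have hforward := log_card_add_sum_shannonEntropy_le hg
  have hbackward : Real.log #X + ∑ i, shannonEntropy X (fun x => h i (x i))
      ≤ ∑ i, shannonEntropy X (fun x => x i) :=
    log_card_add_sum_shannonEntropy_le (ι := ιᵒᵈ) hh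
  have hcoord := sum_le_sum fun i (_ : i ∈ univ) => two_mul_shannonEntropy_le (hc i)
  rw [← mul_sum, sum_add_distrib, sum_add_distrib] at hcoord
  linarith

lemma card_sq_le_prod_card_image_mul [DecidableEq α] {g : ι → α → β} {h : ι → α → γ} {c : ι → ℕ}
    (hg : ∀ i, ∀ x ∈ X, ∀ y ∈ X, (∀ j < i, x j = y j) → g i (x i) = g i (y i))
    (hh : ∀ i, ∀ x ∈ X, ∀ y ∈ X, (∀ j > i, x j = y j) → h i (x i) = h i (y i))
    (hc : ∀ i, ∀ x ∈ X,
      #((fiberThrough X (fun x => (g i (x i), h i (x i))) x).image (fun x => x i)) ≤ c i) :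
    #X ^ 2 ≤ ∏ i, #(X.image fun x => x i) * c i := by
  obtain rfl | ⟨x, hx⟩ := X.eq_empty_or_nonempty
  · simp
  have hX_pos : 0 < #X := card_pos.2 ⟨x, hx⟩
  have himage_pos : ∀ i, 0 < #(X.image fun x => x i) := fun i =>
    card_pos.2 ⟨x i, mem_image_of_mem _ hx⟩
  have hc_pos : ∀ i, 0 < c i := fun i =>
    (card_pos.2 (image_nonempty.2 ⟨x, mem_fiberThrough.2 ⟨hx, rfl⟩⟩)).trans_le (hc i x hx)
  have hlog : Real.log (#X ^ 2) ≤ Real.log (∏ i, (#(X.image fun x => x i) * c i : ℝ)) := by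
    rw [Real.log_pow, Real.log_prod fun i _ => by
      exact_mod_cast (Nat.mul_pos (himage_pos i) (hc_pos i)).ne']
    refine (two_mul_log_card_le hg hh hc).trans_eq (sum_congr rfl fun i _ => ?_)
    rw [Real.log_mul (by exact_mod_cast (himage_pos i).ne') (by exact_mod_cast (hc_pos i).ne')]
  rw [Real.log_le_log_iff (by exact_mod_cast pow_pos hX_pos 2)
    (by exact_mod_cast prod_pos fun i _ => Nat.mul_pos (himage_pos i) (hc_pos i))] at hlog
  exact_mod_cast hlog

end ChainRule

/-! ### Products of greatest common divisors -/

section GcdLcm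

variable {ι : Type*} [LinearOrder ι]

lemma prod_gcd_lcm_filter_lt_mul_lcm (q : ι → ℕ) (s : Finset ι) :
    (∏ i ∈ s, (q i).gcd ({j ∈ s | j < i}.lcm q)) * s.lcm q = ∏ i ∈ s, q i := by
  induction s using Finset.induction_on_max with
  | empty => simp
  | insert a s ha ih =>
    have ha' : a ∉ s := fun h => lt_irrefl a (ha a h)
    have hbelow_a : {j ∈ insert a s | j < a} = s := by
      rw [filter_insert, if_neg (lt_irrefl a), filter_true_of_mem ha]
    have hbelow : ∀ i ∈ s, {j ∈ insert a s | j < i} = {j ∈ s | j < i} := fun i hi => by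
      rw [filter_insert, if_neg (ha i hi).not_gt]
    rw [prod_insert ha', prod_insert ha', lcm_insert, hbelow_a,
      prod_congr rfl fun i hi => by rw [hbelow i hi], ← ih, lcm_eq_nat_lcm,
      mul_right_comm, Nat.gcd_mul_lcm]
    ring

lemma gcd_gcd_mul_dvd_gcd_mul_gcd {q a b : ℕ} (h : q ∣ a.lcm b) :
    q.gcd (a.gcd b) * q ∣ q.gcd a * q.gcd b := by
  have hq : q.gcd (a.gcd b) ∣ q := Nat.gcd_dvd_left _ _
  have hab : q.gcd (a.gcd b) ∣ a.gcd b := Nat.gcd_dvd_right _ _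
  have hprod : q.gcd a * q.gcd b = ((q * q).gcd (b * q)).gcd ((a * q).gcd (a * b)) := by
    rw [mul_comm b q, Nat.gcd_mul_left, Nat.gcd_mul_left, Nat.gcd_mul_right]
  rw [hprod]
  refine Nat.dvd_gcd (Nat.dvd_gcd (mul_dvd_mul_right hq q) ?_) (Nat.dvd_gcd ?_ ?_)
  · exact mul_dvd_mul_right (hab.trans (Nat.gcd_dvd_right a b)) q
  · exact mul_dvd_mul_right (hab.trans (Nat.gcd_dvd_left a b)) q
  · rw [← Nat.gcd_mul_lcm a b]
    exact mul_dvd_mul hab h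

variable [Fintype ι]

/-- The least common multiple of the `q j` with `j < i`; it is `1` if there are none. -/
def lcmBelow (q : ι → ℕ) (i : ι) : ℕ := ({j | j < i} : Finset ι).lcm q

/-- The least common multiple of the `q j` with `j > i`; it is `1` if there are none. -/
def lcmAbove (q : ι → ℕ) (i : ι) : ℕ := ({j | j > i} : Finset ι).lcm q

lemma dvd_lcmBelow (q : ι → ℕ) {i j : ι} (h : j < i) : q j ∣ lcmBelow q i :=
  dvd_lcm (by simpa using h)

lemma dvd_lcmAbove (q : ι → ℕ) {i j : ι} (h : j > i) : q j ∣ lcmAbove q i :=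
  dvd_lcm (by simpa using h)

lemma prod_gcd_gcd_mul_lcm_sq_le {q : ι → ℕ} (hq : ∀ i, 0 < q i)
    (h : ∀ i, q i ∣ (lcmAbove q i).lcm (lcmBelow q i)) :
    (∏ i, (q i).gcd ((lcmAbove q i).gcd (lcmBelow q i))) * univ.lcm q ^ 2 ≤ ∏ i, q i := by
  have hbelow : (∏ i, (q i).gcd (lcmBelow q i)) * univ.lcm q = ∏ i, q i :=
    prod_gcd_lcm_filter_lt_mul_lcm q univ
  have habove : (∏ i, (q i).gcd (lcmAbove q i)) * univ.lcm q = ∏ i, q i :=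
    prod_gcd_lcm_filter_lt_mul_lcm (ι := ιᵒᵈ) q univ
  have hprod_pos : 0 < ∏ i, q i := prod_pos fun i _ => hq i
  refine Nat.le_of_mul_le_mul_right ?_ hprod_pos
  calc (∏ i, (q i).gcd ((lcmAbove q i).gcd (lcmBelow q i))) * univ.lcm q ^ 2 * ∏ i, q i
      = (∏ i, (q i).gcd ((lcmAbove q i).gcd (lcmBelow q i)) * q i) * univ.lcm q ^ 2 := by
        rw [prod_mul_distrib, mul_right_comm]
    _ ≤ (∏ i, (q i).gcd (lcmAbove q i) * (q i).gcd (lcmBelow q i)) * univ.lcm q ^ 2 := by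
        refine Nat.mul_le_mul_right _ (prod_le_prod (fun _ _ => Nat.zero_le _) fun i _ => ?_)
        exact Nat.le_of_dvd
          (Nat.mul_pos (Nat.gcd_pos_of_pos_left _ (hq i)) (Nat.gcd_pos_of_pos_left _ (hq i)))
          (gcd_gcd_mul_dvd_gcd_mul_gcd (h i))
    _ = (∏ i, (q i).gcd (lcmAbove q i)) * univ.lcm q *
          ((∏ i, (q i).gcd (lcmBelow q i)) * univ.lcm q) := by
        rw [prod_mul_distrib]
        ring
    _ = (∏ i, q i) * ∏ i, q i := by rw [habove, hbelow]

end GcdLcm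

/-! ### Zero-sum tuples with prescribed orders -/

section ZeroSum

variable {ι A : Type*} [Fintype ι] [AddCommGroup A]

lemma nsmul_eq_nsmul_of_sum_eq {x y : ι → A} (hsum : ∑ j, x j = ∑ j, y j) {i : ι} {d : ℕ}
    (h : ∀ j ≠ i, d • x j = d • y j) : d • x i = d • y i := by
  classical
  have hrest : ∑ j ∈ univ.erase i, d • x j = ∑ j ∈ univ.erase i, d • y j :=
    sum_congr rfl fun j hj => h j (ne_of_mem_erase hj)
  have htotal : ∑ j, d • x j = ∑ j, d • y j := by rw [← smul_sum, ← smul_sum, hsum]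
  rw [← add_sum_erase _ _ (mem_univ i), ← add_sum_erase _ _ (mem_univ i), hrest] at htotal
  exact add_right_cancel htotal

lemma gcd_nsmul_eq_gcd_nsmul {a b : A} {d e : ℕ} (hd : d • a = d • b) (he : e • a = e • b) :
    d.gcd e • a = d.gcd e • b := by
  rw [← sub_eq_zero, ← nsmul_sub] at *
  exact gcd_nsmul_eq_zero.2 ⟨hd, he⟩

lemma card_le_of_nsmul_eq_nsmul {d : ℕ} (hd : {a : A | d • a = 0}.encard ≤ d) {T : Finset A}
    (hT : ∀ a ∈ T, ∀ b ∈ T, d • a = d • b) : #T ≤ d := by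
  obtain rfl | ⟨b, hb⟩ := T.eq_empty_or_nonempty
  · simp
  have hsub : (· - b) '' (T : Set A) ⊆ {a : A | d • a = 0} := by
    rintro _ ⟨a, ha, rfl⟩
    simpa only [Set.mem_ofPred_eq, nsmul_sub, sub_eq_zero] using hT a ha b hb
  have hcard := (Set.encard_le_encard hsub).trans hd
  rw [sub_left_injective.encard_image, Set.encard_coe_eq_coe_finsetCard] at hcard
  exact_mod_cast hcard

lemma addOrderOf_dvd_lcm_lcmAbove_lcmBelow [LinearOrder ι] {x : ι → A} (hsum : ∑ i, x i = 0)
    (i : ι) :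
    addOrderOf (x i) ∣
      (lcmAbove (fun j => addOrderOf (x j)) i).lcm (lcmBelow (fun j => addOrderOf (x j)) i) := by
  rw [addOrderOf_dvd_iff_nsmul_eq_zero]
  refine (nsmul_eq_nsmul_of_sum_eq (y := 0) (by simpa using hsum) fun j hji => ?_).trans
    (nsmul_zero _)
  rw [Pi.zero_apply, nsmul_zero, ← addOrderOf_dvd_iff_nsmul_eq_zero]
  obtain hlt | hgt := hji.lt_or_gt
  · exact (dvd_lcmBelow _ hlt).trans (Nat.dvd_lcm_right _ _)
  · exact (dvd_lcmAbove _ hgt).trans (Nat.dvd_lcm_left _ _)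

variable [DecidableEq A] {X : Finset (ι → A)} {q : ι → ℕ}

lemma card_sq_le_prod_card_image_mul_gcd [LinearOrder ι]
    (hA : ∀ d : ℕ, 0 < d → {a : A | d • a = 0}.encard ≤ d)
    (hq : ∀ i, 0 < q i) (hord : ∀ x ∈ X, ∀ i, addOrderOf (x i) = q i)
    (hsum : ∀ x ∈ X, ∑ i, x i = 0) :
    #X ^ 2 ≤ ∏ i, #(X.image fun x => x i) * (q i).gcd ((lcmAbove q i).gcd (lcmBelow q i)) := by
  have nsmul_apply {x i d} (hx : x ∈ X) (hd : q i ∣ d) : d • x i = 0 :=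
    addOrderOf_dvd_iff_nsmul_eq_zero.1 ((hord x hx i).symm ▸ hd)
  have nsmul_eq {x y i d} (hx : x ∈ X) (hy : y ∈ X) (h : ∀ j ≠ i, x j = y j ∨ q j ∣ d) :
      d • x i = d • y i := by
    refine nsmul_eq_nsmul_of_sum_eq ((hsum x hx).trans (hsum y hy).symm) fun j hji => ?_
    obtain hxy | hdvd := h j hji
    · rw [hxy]
    · rw [nsmul_apply hx hdvd, nsmul_apply hy hdvd]
  refine card_sq_le_prod_card_image_mul
    (g := fun i a => lcmAbove q i • a) (h := fun i a => lcmBelow q i • a) ?_ ?_ ?_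
  · exact fun i x hx y hy hxy => nsmul_eq hx hy fun j hji =>
      hji.lt_or_gt.imp (hxy j) (dvd_lcmAbove q)
  · exact fun i x hx y hy hxy => nsmul_eq hx hy fun j hji =>
      hji.lt_or_gt.symm.imp (hxy j) (dvd_lcmBelow q)
  · intro i x _
    refine card_le_of_nsmul_eq_nsmul (hA _ (Nat.gcd_pos_of_pos_left _ (hq i))) ?_
    simp only [mem_image, mem_fiberThrough, Prod.mk.injEq]
    rintro _ ⟨y, ⟨hy, hy_above, hy_below⟩, rfl⟩ _ ⟨z, ⟨hz, hz_above, hz_below⟩, rfl⟩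
    refine gcd_nsmul_eq_gcd_nsmul ?_ (gcd_nsmul_eq_gcd_nsmul (hy_above.trans hz_above.symm)
      (hy_below.trans hz_below.symm))
    rw [nsmul_apply hy dvd_rfl, nsmul_apply hz dvd_rfl]

lemma card_mul_lcm_sq_le (hA : ∀ d : ℕ, 0 < d → {a : A | d • a = 0}.encard ≤ d)
    (hq : ∀ i, 0 < q i) (hord : ∀ x ∈ X, ∀ i, addOrderOf (x i) = q i)
    (hsum : ∀ x ∈ X, ∑ i, x i = 0) :
    (#X * univ.lcm q) ^ 2 ≤ ∏ i, #(X.image fun x => x i) * q i := by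
  obtain rfl | ⟨x, hx⟩ := X.eq_empty_or_nonempty
  · simp
  let _ : LinearOrder ι := LinearOrder.lift' (Fintype.equivFin ι) (Equiv.injective _)
  let c (i : ι) : ℕ := (q i).gcd ((lcmAbove q i).gcd (lcmBelow q i))
  have hdvd : ∀ i, q i ∣ (lcmAbove q i).lcm (lcmBelow q i) := fun i => by
    simpa only [hord x hx] using addOrderOf_dvd_lcm_lcmAbove_lcmBelow (hsum x hx) i
  calc (#X * univ.lcm q) ^ 2 = #X ^ 2 * univ.lcm q ^ 2 := mul_pow _ _ _
    _ ≤ (∏ i, #(X.image fun x => x i) * c i) * univ.lcm q ^ 2 := by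
        gcongr
        exact card_sq_le_prod_card_image_mul_gcd hA hq hord hsum
    _ = (∏ i, #(X.image fun x => x i)) * ((∏ i, c i) * univ.lcm q ^ 2) := by
        rw [prod_mul_distrib, mul_assoc]
    _ ≤ (∏ i, #(X.image fun x => x i)) * ∏ i, q i := by
        gcongr
        exact prod_gcd_gcd_mul_lcm_sq_le hq hdvd
    _ = ∏ i, #(X.image fun x => x i) * q i := prod_mul_distrib.symm

end ZeroSum

/-! ### Moments of the divisor function -/

section DivisorSums

lemma card_divisors_mul_le (a b : ℕ) : #(a * b).divisors ≤ #a.divisors * #b.divisors := by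
  open scoped Pointwise in
  rw [Nat.divisors_mul]
  exact card_mul_le

lemma sum_card_divisors_mul_le_sq {g : ℕ → ℝ} (hg : ∀ n, 0 ≤ g n)
    (hmul : ∀ a b, g (a * b) ≤ g a * g b) (N : ℕ) :
    ∑ n ∈ Ioc 0 N, #n.divisors * g n ≤ (∑ n ∈ Ioc 0 N, g n) ^ 2 :=
  calc ∑ n ∈ Ioc 0 N, #n.divisors * g n
      ≤ ∑ n ∈ Ioc 0 N, ∑ d ∈ n.divisors, g d * g (n / d) := by
        refine sum_le_sum fun n _ => ?_
        rw [← nsmul_eq_mul, ← sum_const]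
        refine sum_le_sum fun d hd => ?_
        simpa only [Nat.mul_div_cancel' (Nat.dvd_of_mem_divisors hd)] using hmul d (n / d)
    _ = ∑ n ∈ Ioc 0 N, ∑ x ∈ Ioc 0 N ×ˢ Ioc 0 N with x.1 * x.2 = n, g x.1 * g x.2 := by
        refine sum_congr rfl fun n hn => ?_
        rw [mem_Ioc] at hn
        rw [← Nat.sum_divisorsAntidiagonal fun a b => g a * g b,
          Nat.divisorsAntidiagonal_eq_prod_filter_of_le hn.1.ne' hn.2]
    _ ≤ ∑ x ∈ Ioc 0 N ×ˢ Ioc 0 N, g x.1 * g x.2 :=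
        sum_fiberwise_le_sum_of_sum_fiber_nonneg fun _ _ =>
          sum_nonneg fun x _ => mul_nonneg (hg x.1) (hg x.2)
    _ = (∑ n ∈ Ioc 0 N, g n) ^ 2 := by rw [sq, sum_mul_sum, sum_product]

lemma sum_card_divisors_pow_div_le (k N : ℕ) :
    ∑ n ∈ Ioc 0 N, (#n.divisors ^ k / n : ℝ) ≤ (∑ n ∈ Ioc 0 N, (n : ℝ)⁻¹) ^ 2 ^ k := by
  induction k with
  | zero => simp
  | succ k ih =>
    have hmul (a b : ℕ) : (#(a * b).divisors ^ k / (a * b : ℕ) : ℝ)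
        ≤ #a.divisors ^ k / a * (#b.divisors ^ k / b) := by
      rw [div_mul_div_comm, ← mul_pow, Nat.cast_mul]
      gcongr
      exact_mod_cast card_divisors_mul_le a b
    calc ∑ n ∈ Ioc 0 N, (#n.divisors ^ (k + 1) / n : ℝ)
        = ∑ n ∈ Ioc 0 N, #n.divisors * (#n.divisors ^ k / n : ℝ) :=
          sum_congr rfl fun n _ => by ring
      _ ≤ (∑ n ∈ Ioc 0 N, (#n.divisors ^ k / n : ℝ)) ^ 2 :=
          sum_card_divisors_mul_le_sq (fun _ => by positivity) hmul N
      _ ≤ ((∑ n ∈ Ioc 0 N, (n : ℝ)⁻¹) ^ 2 ^ k) ^ 2 := by gcongr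
      _ = (∑ n ∈ Ioc 0 N, (n : ℝ)⁻¹) ^ 2 ^ (k + 1) := by rw [← pow_mul, ← pow_succ]

lemma sum_Ioc_inv_le_one_add_log (N : ℕ) : ∑ n ∈ Ioc 0 N, (n : ℝ)⁻¹ ≤ 1 + Real.log N := by
  have h := harmonic_le_one_add_log N
  rw [harmonic_eq_sum_Icc] at h
  push_cast at h
  exact h

variable {ι : Type*} [Fintype ι]

lemma card_filter_lcm_eq_le (T : Finset (ι → ℕ)) {n : ℕ} (hn : n ≠ 0) :
    #{q ∈ T | univ.lcm q = n} ≤ #n.divisors ^ Fintype.card ι := by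
  classical
  have hsub : {q ∈ T | univ.lcm q = n} ⊆ Fintype.piFinset fun _ => n.divisors := fun q hq => by
    simp only [Fintype.mem_piFinset, Nat.mem_divisors]
    exact fun i => ⟨(mem_filter.1 hq).2 ▸ dvd_lcm (mem_univ i), hn⟩
  simpa only [Fintype.card_piFinset, prod_const, card_univ] using card_le_card hsub

variable [DecidableEq ι]

lemma lcm_mem_Ioc {R : ℕ} {q : ι → ℕ} (hq : q ∈ Fintype.piFinset fun _ => Ioc 0 R) :
    univ.lcm q ∈ Ioc 0 (R ^ Fintype.card ι) := by
  simp only [Fintype.mem_piFinset, mem_Ioc] at hq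
  have hprod_pos : 0 < ∏ i, q i := prod_pos fun i _ => (hq i).1
  have hdvd : univ.lcm q ∣ ∏ i, q i := lcm_dvd fun i hi => dvd_prod_of_mem q hi
  refine mem_Ioc.2 ⟨Nat.pos_of_dvd_of_pos hdvd hprod_pos, (Nat.le_of_dvd hprod_pos hdvd).trans ?_⟩
  exact prod_le_pow_card univ q R fun i _ => (hq i).2

lemma sum_inv_lcm_le (R : ℕ) :
    ∑ q ∈ Fintype.piFinset fun _ : ι => Ioc 0 R, ((univ.lcm q : ℕ) : ℝ)⁻¹
      ≤ (1 + Fintype.card ι * Real.log R) ^ 2 ^ Fintype.card ι := by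
  let k := Fintype.card ι
  let T := Fintype.piFinset fun _ : ι => Ioc 0 R
  calc ∑ q ∈ T, ((univ.lcm q : ℕ) : ℝ)⁻¹
      = ∑ n ∈ Ioc 0 (R ^ k), ∑ q ∈ T with univ.lcm q = n, ((univ.lcm q : ℕ) : ℝ)⁻¹ :=
        (sum_fiberwise_of_maps_to (fun _ => lcm_mem_Ioc) _).symm
    _ ≤ ∑ n ∈ Ioc 0 (R ^ k), (#n.divisors ^ k / n : ℝ) := by
        refine sum_le_sum fun n hn => ?_
        rw [sum_congr rfl fun q hq => by rw [(mem_filter.1 hq).2], sum_const, nsmul_eq_mul,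
          ← div_eq_mul_inv]
        gcongr
        exact_mod_cast card_filter_lcm_eq_le T (mem_Ioc.1 hn).1.ne'
    _ ≤ (∑ n ∈ Ioc 0 (R ^ k), (n : ℝ)⁻¹) ^ 2 ^ k := sum_card_divisors_pow_div_le k (R ^ k)
    _ ≤ (1 + k * Real.log R) ^ 2 ^ k := by
        gcongr
        simpa only [Nat.cast_pow, Real.log_pow] using sum_Ioc_inv_le_one_add_log (R ^ k)

end DivisorSums

/-! ### Counting zero-sum tuples -/

section ZeroSumCount

variable {ι A : Type*} [Fintype ι] [AddCommGroup A] [DecidableEq A]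

lemma card_le_sqrt_pow_div_lcm (hA : ∀ d : ℕ, 0 < d → {a : A | d • a = 0}.encard ≤ d)
    {X : Finset (ι → A)} {q : ι → ℕ} {R n : ℕ} (hq : ∀ i, q i ∈ Ioc 0 R)
    (hord : ∀ x ∈ X, ∀ i, addOrderOf (x i) = q i) (hsum : ∀ x ∈ X, ∑ i, x i = 0)
    (hn : ∀ i, #(X.image fun x => x i) ≤ n) :
    (#X : ℝ) ≤ √(R * n) ^ Fintype.card ι * ((univ.lcm q : ℕ) : ℝ)⁻¹ := by
  simp only [mem_Ioc] at hq
  have hlcm_pos : 0 < univ.lcm q :=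
    Nat.pos_of_ne_zero (lcm_ne_zero_iff.2 fun i _ => (hq i).1.ne')
  have hsq : (#X * univ.lcm q) ^ 2 ≤ (R * n) ^ Fintype.card ι :=
    calc (#X * univ.lcm q) ^ 2
        ≤ ∏ i, #(X.image fun x => x i) * q i :=
          card_mul_lcm_sq_le hA (fun i => (hq i).1) hord hsum
      _ ≤ (R * n) ^ Fintype.card ι := prod_le_pow_card _ _ _ fun i _ => by
          rw [mul_comm R]
          exact Nat.mul_le_mul (hn i) (hq i).2
  rw [← div_eq_mul_inv, le_div_iff₀ (by exact_mod_cast hlcm_pos)]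
  refine le_of_sq_le_sq ?_ (by positivity)
  rw [pow_right_comm, Real.sq_sqrt (by positivity)]
  exact_mod_cast hsq

theorem card_sum_eq_zero_le [DecidableEq ι]
    (hA : ∀ d : ℕ, 0 < d → {a : A | d • a = 0}.encard ≤ d) {S : ι → Finset A} {R n : ℕ}
    (hS : ∀ i, ∀ a ∈ S i, addOrderOf a ∈ Ioc 0 R)
    (hn : ∀ i, ∀ q ≤ R, #{a ∈ S i | addOrderOf a = q} ≤ n) :
    (#{x ∈ Fintype.piFinset S | ∑ i, x i = 0} : ℝ)
      ≤ (1 + Fintype.card ι * Real.log R) ^ 2 ^ Fintype.card ι * √(R * n) ^ Fintype.card ι := by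
  let orders (x : ι → A) (i : ι) : ℕ := addOrderOf (x i)
  let Z : Finset (ι → A) := {x ∈ Fintype.piFinset S | ∑ i, x i = 0}
  let T := Fintype.piFinset fun _ : ι => Ioc 0 R
  have mem_Z {x} : x ∈ Z ↔ (∀ i, x i ∈ S i) ∧ ∑ i, x i = 0 := by
    rw [mem_filter, Fintype.mem_piFinset]
  have horders : ∀ x ∈ Z, orders x ∈ T := fun x hx =>
    Fintype.mem_piFinset.2 fun i => hS i _ ((mem_Z.1 hx).1 i)
  have hfiber : ∀ q ∈ T, (#{x ∈ Z | orders x = q} : ℝ)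
      ≤ √(R * n) ^ Fintype.card ι * ((univ.lcm q : ℕ) : ℝ)⁻¹ := fun q hq => by
    rw [Fintype.mem_piFinset] at hq
    refine card_le_sqrt_pow_div_lcm hA hq (fun x hx => congrFun (mem_filter.1 hx).2)
      (fun x hx => (mem_Z.1 (mem_filter.1 hx).1).2) fun i => ?_
    refine (card_le_card (image_subset_iff.2 fun x hx => ?_)).trans (hn i _ (mem_Ioc.1 (hq i)).2)
    rw [mem_filter] at hx ⊢
    exact ⟨(mem_Z.1 hx.1).1 i, congrFun hx.2 i⟩
  calc (#Z : ℝ) = ∑ q ∈ T, (#{x ∈ Z | orders x = q} : ℝ) := by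
        exact_mod_cast card_eq_sum_card_fiberwise horders
    _ ≤ ∑ q ∈ T, √(R * n) ^ Fintype.card ι * ((univ.lcm q : ℕ) : ℝ)⁻¹ := sum_le_sum hfiber
    _ ≤ _ := by
        rw [← mul_sum, mul_comm]
        gcongr
        exact sum_inv_lcm_le R

end ZeroSumCount

/-! ### Rational points of the circle -/

section Torus

lemma torusNorm_nonpos_iff {x : ℝ} : torusNorm x ≤ 0 ↔ (x : UnitAddCircle) = 0 := by
  rw [torusNorm, ← UnitAddCircle.norm_eq, norm_le_zero_iff]

lemma den_eq_addOrderOf (x : ℝ) : den x = addOrderOf (x : UnitAddCircle) := by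
  have hnsmul (q : ℕ) : (∃ a : ℤ, x * q = a) ↔ q • (x : UnitAddCircle) = 0 := by
    rw [← AddCircle.coe_nsmul, AddCircle.coe_eq_zero_iff]
    simp only [nsmul_eq_mul, zsmul_eq_mul, mul_one, mul_comm x, eq_comm]
  simp only [den, hnsmul, addOrderOf, Function.minimalPeriod_eq_sInf_n_pos_IsPeriodicPt,
    isPeriodicPt_add_iff_nsmul_eq_zero, gt_iff_lt]

lemma addOrderOf_coe_ite_neg (p : Prop) [Decidable p] (x : ℝ) :
    addOrderOf ((if p then x else -x : ℝ) : UnitAddCircle) = den x := by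
  split_ifs <;> simp only [AddCircle.coe_neg, addOrderOf_neg, den_eq_addOrderOf]

lemma den_div_mem_Ioc {a q : ℕ} (hq : 0 < q) : den (a / q) ∈ Ioc 0 q := by
  have hnsmul : q • ((a / q : ℝ) : UnitAddCircle) = 0 := by
    rw [← AddCircle.coe_nsmul, nsmul_eq_mul, mul_div_cancel₀ _ (by positivity)]
    exact AddCircle.coe_eq_zero_iff _ |>.2 ⟨a, by simp⟩
  rw [den_eq_addOrderOf, mem_Ioc]
  exact ⟨addOrderOf_pos_iff.2 (isOfFinAddOrder_iff_nsmul_eq_zero.2 ⟨q, hq, hnsmul⟩),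
    addOrderOf_le_of_nsmul_eq_zero hq hnsmul⟩

lemma encard_nsmul_eq_zero_le {d : ℕ} (hd : 0 < d) :
    {u : UnitAddCircle | d • u = 0}.encard ≤ d :=
  AddCircle.card_torsion_le_of_isSMulRegular 1 d hd.ne' fun _ _ h => by
    simpa [hd.ne'] using h

open scoped Classical in
lemma energy_zero_le_card {S : Finset ℝ} (hS : (S : Set ℝ) ⊆ Set.Ioc 0 1) (m : ℕ) :
    energy m S 0 ≤ #{x ∈ Fintype.piFinset fun i : Fin (2 * m) =>
      S.image fun b => ((if (i : ℕ) < m then b else -b : ℝ) : UnitAddCircle) | ∑ i, x i = 0} := by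
  refine card_le_card_of_injOn
    (fun b i => ((if (i : ℕ) < m then b i else -b i : ℝ) : UnitAddCircle)) ?_ ?_
  · intro b hb
    simp only [coe_filter, Set.mem_ofPred_eq, Fintype.mem_piFinset, torusNorm_nonpos_iff] at hb ⊢
    exact ⟨fun i => mem_image_of_mem _ (hb.1 i), by simpa using hb.2⟩
  · intro b hb b' hb' hbb'
    simp only [coe_filter, Set.mem_ofPred_eq, Fintype.mem_piFinset] at hb hb'
    funext i
    have hi : (b i : UnitAddCircle) = b' i := by
      have hsigned := congrFun hbb' i
      dsimp only at hsigned
      split_ifs at hsigned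
      · exact hsigned
      · simpa only [AddCircle.coe_neg, neg_inj] using hsigned
    exact (AddCircle.coe_eq_coe_iff_of_mem_Ioc (a := 0) (by simpa using hS (hb.1 i))
      (by simpa using hS (hb'.1 i))).1 hi

end Torus

lemma one_add_two_mul_mul_pow_le {L : ℝ} (hL : 4 / 3 ≤ L) (m : ℕ) :
    (1 + (2 * m : ℕ) * L) ^ 2 ^ (2 * m) ≤ L ^ 20 ^ m := by
  have one_le_L : 1 ≤ L := by linarith
  have three_le : 3 ≤ L ^ 4 :=
    calc (3 : ℝ) ≤ (4 / 3) ^ 4 := by norm_num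
      _ ≤ L ^ 4 := by gcongr
  have bernoulli_three : 1 + m * (3 - 1 : ℝ) ≤ 3 ^ m := one_add_mul_sub_le_pow (by norm_num) m
  have bernoulli_five : 1 + m * (5 - 1 : ℝ) ≤ 5 ^ m := one_add_mul_sub_le_pow (by norm_num) m
  have exponent_le : 1 + m * 4 ≤ 5 ^ m := by
    norm_num at bernoulli_five
    exact_mod_cast bernoulli_five
  have base_le : 1 + (2 * m : ℕ) * L ≤ L ^ 5 ^ m :=
    calc 1 + (2 * m : ℕ) * L ≤ (1 + m * (3 - 1)) * L := by
          push_cast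
          linarith
      _ ≤ (L ^ 4) ^ m * L := by
          gcongr
          exact bernoulli_three.trans (by gcongr)
      _ = L ^ (1 + m * 4) := by ring
      _ ≤ L ^ 5 ^ m := pow_le_pow_right₀ one_le_L exponent_le
  calc (1 + (2 * m : ℕ) * L) ^ 2 ^ (2 * m) ≤ (L ^ 5 ^ m) ^ 2 ^ (2 * m) := by gcongr
    _ = L ^ 20 ^ m := by
        rw [← pow_mul, pow_mul 2, ← mul_pow]
        norm_num

lemma four_thirds_le_log {Q : ℝ} (hQ : 4 ≤ Q) : 4 / 3 ≤ Real.log Q := by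
  have hlog_four : Real.log 4 = 2 * Real.log 2 := by
    rw [show (4 : ℝ) = 2 ^ 2 by norm_num, Real.log_pow, Nat.cast_ofNat]
  have hmono := Real.log_le_log (by norm_num) hQ
  linarith [Real.log_two_gt_d9]

lemma energy_zero_le {R n : ℕ} {S : Finset ℝ} (hS : (S : Set ℝ) ⊆ Set.Ioc 0 1)
    (hden : ∀ x ∈ S, den x ∈ Ioc 0 R) (hn : ∀ q ≤ R, #{x ∈ S | den x = q} ≤ n) (m : ℕ) :
    (energy m S 0 : ℝ) ≤ (1 + (2 * m : ℕ) * Real.log R) ^ 2 ^ (2 * m) * (R * n) ^ m := by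
  classical
  have hcount := card_sum_eq_zero_le (fun d => encard_nsmul_eq_zero_le)
    (S := fun i : Fin (2 * m) =>
      S.image fun b => ((if (i : ℕ) < m then b else -b : ℝ) : UnitAddCircle)) (R := R) (n := n)
    (fun i => forall_mem_image.2 fun x hx => by
      rw [addOrderOf_coe_ite_neg]
      exact hden x hx)
    (fun i q hq => by
      simp only [filter_image, addOrderOf_coe_ite_neg]
      exact card_image_le.trans (hn q hq))
  rw [Fintype.card_fin, pow_mul √_, Real.sq_sqrt (by positivity)] at hcount
  exact (Nat.cast_le.2 (energy_zero_le_card hS m)).trans hcount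

theorem stmt18_general {Q : ℝ} (hQ : 4 ≤ Q) {n : ℕ} {S : Finset ℝ}
    (hS : ∀ x ∈ S, ∃ a q : ℕ, 1 ≤ a ∧ a ≤ q ∧ (q : ℝ) ≤ Q ∧ x = (a : ℝ) / q)
    (hn : ∀ q : ℕ, (q : ℝ) ≤ Q → #{x ∈ S | den x = q} ≤ n) (m : ℕ) :
    (energy m S 0 : ℝ) ≤ Real.log Q ^ ((20 : ℝ) ^ m) * (Q * n) ^ m := by
  have hfloor_le : (⌊Q⌋₊ : ℝ) ≤ Q := Nat.floor_le (by linarith)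
  have hlog_nonneg : 0 ≤ Real.log Q := Real.log_nonneg (by linarith)
  have hfloor_pos : 0 < ⌊Q⌋₊ := Nat.floor_pos.2 (by linarith)
  have hS_Ioc : (S : Set ℝ) ⊆ Set.Ioc 0 1 := fun x hx => by
    obtain ⟨a, q, ha, haq, -, rfl⟩ := hS x hx
    have hq : (0 : ℝ) < q := by exact_mod_cast ha.trans haq
    exact ⟨div_pos (by exact_mod_cast ha) hq, (div_le_one hq).2 (by exact_mod_cast haq)⟩
  have hden : ∀ x ∈ S, den x ∈ Ioc 0 ⌊Q⌋₊ := fun x hx => by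
    obtain ⟨a, q, ha, haq, hqQ, rfl⟩ := hS x hx
    exact Ioc_subset_Ioc_right (Nat.le_floor hqQ) (den_div_mem_Ioc (ha.trans haq))
  calc (energy m S 0 : ℝ)
      ≤ (1 + (2 * m : ℕ) * Real.log ⌊Q⌋₊) ^ 2 ^ (2 * m) * (⌊Q⌋₊ * n) ^ m :=
        energy_zero_le hS_Ioc hden (fun q hq => hn q ((Nat.cast_le.2 hq).trans hfloor_le)) m
    _ ≤ (1 + (2 * m : ℕ) * Real.log Q) ^ 2 ^ (2 * m) * (Q * n) ^ m := by gcongr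
    _ ≤ Real.log Q ^ 20 ^ m * (Q * n) ^ m := by
        gcongr
        exact one_add_two_mul_mul_pow_le (four_thirds_le_log hQ) m
    _ = Real.log Q ^ ((20 : ℝ) ^ m) * (Q * n) ^ m := by
        rw [← Real.rpow_natCast, Nat.cast_pow, Nat.cast_ofNat]

open scoped Classical in
/-- Lemma 6.2 (additive energy of rationals with small denominators, after Bloom–Maynard):
if `S ⊆ 𝕋` consists of fractions `a/q` with `1 ≤ a ≤ q ≤ Q`, lies in an interval of length
`1/8m`, and has at most `n` elements of any given denominator `q ≤ Q`, then
`E_{2m}(S;0) ≤ (log Q)^{C^m}·(Qn)^m`. -/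
theorem stmt18 :
    ∃ C : ℝ, 0 < C ∧
      ∀ Q : ℝ, 4 ≤ Q → ∀ m : ℕ, 2 ≤ m → ∀ n : ℕ, 0 < n → ∀ S : Finset ℝ,
        (∀ x ∈ S, ∃ a q : ℕ, 1 ≤ a ∧ a ≤ q ∧ (q : ℝ) ≤ Q ∧ x = (a : ℝ) / q) →
        (∃ t : ℝ, ∀ x ∈ S, torusNorm (x - t) ≤ 1 / (16 * m)) →
        (∀ q : ℕ, (q : ℝ) ≤ Q → (S.filter (fun x => den x = q)).card ≤ n) →
        (energy m S 0 : ℝ) ≤ Real.log Q ^ (C ^ m) * (Q * n) ^ m :=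
  ⟨20, by norm_num, fun _ hQ m _ _ _ _ hS _ hn => stmt18_general hQ hS hn m⟩
end
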